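/- Let P be any family of subsets of 𝟚^ℤ. Suppose there exists a non-surjective cellular automaton F₀ on 𝟚 with Ω_{F₀} ∈ P, and there exists a non-surjective cellular automaton F₁ on 𝟚 with Ω_{F₁} ∉ P. Let π : 𝟚^{ℤ×ℤ} → 𝟚^ℤ be the projection π(x) = (j ↦ x(0, j)). Then the problem, given a code of a two-dimensional subshift of finite type Σ ⊆ 𝟚^{ℤ×ℤ} (a finite set of forbidden finite patterns), of deciding whether π(Σ) ∈ P, is undecidable: the predicate 'π(Σ) ∈ P' on codes of two-dimensional subshifts of finite type is not a computable predicate. -/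

import Mathlib

/-- The configuration space of a one-dimensional cellular automaton over alphabet `B`. -/
abbrev Config (B : Type*) := ℤ → B

/-- The global map induced by the local rule `f` of radius `r`. -/
def caMap {B : Type*} (r : ℕ) (f : (Fin (2 * r + 1) → B) → B) : Config B → Config B :=
  fun x i => f fun j => x (i - (r : ℤ) + ((j : ℕ) : ℤ))

/-- The limit set `Ω_F = ⋂_{j ∈ ℕ} F^j(B^ℤ)`. -/
def limitSet {B : Type*} (F : Config B → Config B) : Set (Config B) :=
  ⋂ j : ℕ, Set.range F^[j]

/-- `F` is a cellular automaton: it is induced by some local rule of some radius. -/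
def IsCA {B : Type*} (F : Config B → Config B) : Prop :=
  ∃ (r : ℕ) (f : (Fin (2 * r + 1) → B) → B), F = caMap r f

/-- A code `(m, L)` of a two-dimensional subshift of finite type on `𝟚 = Bool`:
a size `m` and a finite set `L` of forbidden `m × m` patterns. -/
abbrev SFTCode := Σ m : ℕ, Finset (Fin m → Fin m → Bool)

/-- The two-dimensional subshift of finite type coded by `c = (m, L)`: the set of
configurations `x : 𝟚^{ℤ×ℤ}` such that no translate of `x` restricted to the square
`[0,m) × [0,m)` equals a pattern of `L`. -/
def sftOfCode (c : SFTCode) : Set (ℤ × ℤ → Bool) :=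
  {x | ∀ a b : ℤ, (fun (i j : Fin c.1) =>
    x (a + ((i : ℕ) : ℤ), b + ((j : ℕ) : ℤ))) ∉ c.2}

/-- The projection `π : 𝟚^{ℤ×ℤ} → 𝟚^ℤ`, `π(x) = (j ↦ x(0,j))`. -/
def proj (x : ℤ × ℤ → Bool) : Config Bool := fun j => x (0, j)

/-!
Fix a cellular automaton `F` which is not surjective, and hence has an orphan `w`: a word occurring
in no image. To a tile set we associate the subshift of the planes whose rows form an orbit of `F`,
up to errors which are allowed only above a few matching *blocks*, words which contain `w` and code
tiles. A block occurs in no image either, so that it comes from errors, and below these there are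
further blocks. Going down, the blocks in the past of a single error therefore tile cones of
arbitrary size. If the tile set does not tile the plane, there are thus no errors, and the
projection of the subshift is the limit set of `F`. If it does tile the plane, then the blocks of a
tiling can be put below row `0`, the error above them yields an arbitrary row `0`, and the
projection is the full shift. Given `F₀` and `F₁` as in the theorem, a decision procedure
answers differently for the two subshifts if and only if the tile set does not tile the plane. So it
would decide the domino problem.

The domino problem is undecidable by a reduction from the halting problem, along the lines of
Robinson's proof. A skeleton forces a hierarchy of squares: up to translation, those of scale `r`
project to the intervals `[4 ^ r, 3 * 4 ^ r)` modulo `4 ^ (r + 1)`. Inside a square, the rows and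
columns which meet no smaller square are free, and the crossings of free rows and columns are the
nodes of a grid of size growing with `r`. In each grid a space-time diagram of the machine is
started at the bottom edge, so that the plane is tiled if and only if the machine runs forever.
-/

namespace RiceSFT

/-! ### A hierarchical skeleton -/

/-- What a line of the skeleton shows at one of its points. A line `2 ^ s * (2 * q + 1)` of level
`s` shows at abscissa `x` the phase `⌊2x / 2 ^ s⌋` modulo `8`, a landmark where `2 ^ s` divides
`2x`, whether its level is `0` (`ground`) or odd, and a mark on every other line of its level.
The signals `behind` and `ahead` tell whether the point lies in a square of the skeleton. -/
structure Half where
  phase : ZMod 8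
  landmark : Bool
  ground : Bool
  mark : Bool
  odd : Bool
  behind : Bool
  ahead : Bool

/-- A cell of the skeleton: what its row and its column show. -/
abbrev SkeletonCell := Half × Half

/-- The crossing of a row and a column of the same level. -/
structure SameLevel (p : SkeletonCell) : Prop where
  row_landmark : p.1.landmark
  col_landmark : p.2.landmark
  row_phase : p.1.phase = 2 ∨ p.1.phase = 6
  col_phase : p.2.phase = 2 ∨ p.2.phase = 6
  odd : p.1.odd = p.2.odd
  row_phase_iff : p.1.phase = 2 ↔ p.2.mark
  col_phase_iff : p.2.phase = 2 ↔ p.1.mark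

/-- The crossing of a row with a column exactly one level lower. -/
structure HalfLevel (p : SkeletonCell) : Prop where
  row_landmark : p.1.landmark
  col_landmark : p.2.landmark
  row_phase : p.1.phase = 1 ∨ p.1.phase = 3 ∨ p.1.phase = 5 ∨ p.1.phase = 7
  col_phase : p.2.phase = 4
  odd : p.1.odd = !p.2.odd
  row_phase_iff : (p.1.phase = 1 ∨ p.1.phase = 5) ↔ p.2.mark

/-- The crossing of a row with a column at least two levels lower. -/
structure FineLevel (p : SkeletonCell) : Prop where
  row_landmark : ¬ p.1.landmark
  col_landmark : p.2.landmark
  col_phase : p.2.phase = 0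

/-- The crossings allowed in a skeleton. -/
def IsCrossing (p : SkeletonCell) : Prop :=
  SameLevel p ∨ HalfLevel p ∨ FineLevel p ∨ HalfLevel p.swap ∨ FineLevel p.swap

/-- The cells allowed in a skeleton. -/
structure IsCell (p : SkeletonCell) : Prop where
  crossing : IsCrossing p
  row_ground : p.1.ground → ¬ p.1.odd ∧ p.1.landmark
  col_ground : p.2.ground → ¬ p.2.odd ∧ p.2.landmark
  ground_ground : p.1.ground → p.2.ground → SameLevel p

/-- The cell `q` may stand to the right of the cell `p`. -/
structure StepRight (p q : SkeletonCell) : Prop where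
  ground : q.1.ground = p.1.ground
  mark : q.1.mark = p.1.mark
  odd : q.1.odd = p.1.odd
  col_ground : q.2.ground = !p.2.ground
  phase : q.1.phase = p.1.phase + if p.1.ground then 2 else if q.1.landmark then 1 else 0

/-- A plane of skeleton cells, indexed by column and row, that obeys the local rules. -/
structure IsSkeleton (c : ℤ → ℤ → SkeletonCell) : Prop where
  cell : ∀ i j, IsCell (c i j)
  right : ∀ i j, StepRight (c i j) (c (i + 1) j)
  up : ∀ i j, StepRight (c i j).swap (c i (j + 1)).swap

section Crossing

variable {p : SkeletonCell}

theorem SameLevel.swap (h : SameLevel p) : SameLevel p.swap :=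
  ⟨h.col_landmark, h.row_landmark, h.col_phase, h.row_phase, h.odd.symm, h.col_phase_iff,
    h.row_phase_iff⟩

theorem IsCrossing.swap (h : IsCrossing p) : IsCrossing p.swap := by
  rcases h with h | h | h | h | h
  · exact .inl h.swap
  · exact .inr (.inr (.inr (.inl h)))
  · exact .inr (.inr (.inr (.inr h)))
  · exact .inr (.inl h)
  · exact .inr (.inr (.inl h))

theorem IsCell.swap (h : IsCell p) : IsCell p.swap :=
  ⟨h.crossing.swap, h.col_ground, h.row_ground, fun hr hc ↦ (h.ground_ground hc hr).swap⟩

theorem IsCrossing.sameLevel (h : IsCrossing p) (hl : p.1.landmark)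
    (hp : p.1.phase = 2 ∨ p.1.phase = 6) : SameLevel p := by
  have absurd_phase : ∀ x : ZMod 8, x = 2 ∨ x = 6 →
      ¬ (x = 1 ∨ x = 3 ∨ x = 5 ∨ x = 7) ∧ x ≠ 4 ∧ x ≠ 0 := by decide
  obtain ⟨hodd, hfour, hzero⟩ := absurd_phase _ hp
  rcases h with h | h | h | h | h
  · exact h
  · exact (hodd h.row_phase).elim
  · exact (h.row_landmark hl).elim
  · exact (hfour h.col_phase).elim
  · exact (hzero h.col_phase).elim

theorem IsCrossing.halfLevel (h : IsCrossing p) (hl : p.2.landmark) (hp : p.2.phase = 4) :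
    HalfLevel p := by
  rcases h with h | h | h | h | h
  · exact absurd h.col_phase (by rw [hp]; decide)
  · exact h
  · exact absurd h.col_phase (by rw [hp]; decide)
  · exact absurd h.row_phase (by rw [Prod.fst_swap, hp]; decide)
  · exact (h.row_landmark hl).elim

theorem IsCrossing.not_row_landmark (h : IsCrossing p) (hl : p.2.landmark) (hp : p.2.phase = 0) :
    ¬ p.1.landmark := by
  rcases h with h | h | h | h | h
  · exact absurd h.col_phase (by rw [hp]; decide)
  · exact absurd h.col_phase (by rw [hp]; decide)
  · exact h.row_landmark
  · exact absurd h.row_phase (by rw [Prod.fst_swap, hp]; decide)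
  · exact (h.row_landmark hl).elim

end Crossing

/-- The plane `c` with its axes exchanged. -/
def transposed (c : ℤ → ℤ → SkeletonCell) : ℤ → ℤ → SkeletonCell := fun i j ↦ (c j i).swap

/-- The plane `c` seen from the point `(a, b)`. -/
def translated {α : Type*} (a b : ℤ) (c : ℤ → ℤ → α) : ℤ → ℤ → α := fun i j ↦ c (i + a) (j + b)

theorem IsSkeleton.transpose {c : ℤ → ℤ → SkeletonCell} (h : IsSkeleton c) :
    IsSkeleton (transposed c) :=
  ⟨fun i j ↦ (h.cell j i).swap, fun i j ↦ h.up j i, fun i j ↦ h.right j i⟩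

theorem IsSkeleton.translate {c : ℤ → ℤ → SkeletonCell} (h : IsSkeleton c) (a b : ℤ) :
    IsSkeleton (translated a b c) where
  cell _ _ := h.cell _ _
  right i j := by simpa [translated, add_right_comm] using h.right (i + a) (j + b)
  up i j := by simpa [translated, add_right_comm] using h.up (i + a) (j + b)

theorem eq_of_forall_add_one_eq {α : Type*} {f : ℤ → α} (h : ∀ i, f (i + 1) = f i) (i j : ℤ) :
    f i = f j := by
  have const : ∀ i, f i = f 0 := fun i ↦ by
    simpa using (show Function.Periodic f 1 from h).int_mul i 0
  rw [const i, const j]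

section Lines

variable {c : ℤ → ℤ → SkeletonCell} (h : IsSkeleton c)

include h

theorem IsSkeleton.row_mark_eq (i i' j : ℤ) : (c i j).1.mark = (c i' j).1.mark :=
  eq_of_forall_add_one_eq (f := fun i ↦ (c i j).1.mark) (fun i ↦ (h.right i j).mark) i i'

theorem IsSkeleton.row_ground_eq (i i' j : ℤ) : (c i j).1.ground = (c i' j).1.ground :=
  eq_of_forall_add_one_eq (f := fun i ↦ (c i j).1.ground) (fun i ↦ (h.right i j).ground) i i'

theorem IsSkeleton.row_odd_eq (i i' j : ℤ) : (c i j).1.odd = (c i' j).1.odd :=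
  eq_of_forall_add_one_eq (f := fun i ↦ (c i j).1.odd) (fun i ↦ (h.right i j).odd) i i'

theorem IsSkeleton.row_ground_add_one (i j : ℤ) : (c i (j + 1)).1.ground = !(c i j).1.ground :=
  (h.up i j).col_ground

end Lines

/-! ### Alignment of the levels -/

/-- The `q`-th line of level `s`. -/
def line (s : ℕ) (q : ℤ) : ℤ := 2 ^ s * (2 * q + 1)

theorem two_mul_line_add (s d : ℕ) (q : ℤ) :
    2 * line (s + d) q = 2 ^ s * (2 ^ d * (2 * (2 * q + 1))) := by
  unfold line; ring

theorem exists_eq_line_of_not_dvd {u : ℕ} {x : ℤ} (hx : ¬ (2 : ℤ) ^ u ∣ x) :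
    ∃ s < u, ∃ q, x = line s q := by
  induction u with
  | zero => simp at hx
  | succ u ih =>
    by_cases hu : (2 : ℤ) ^ u ∣ x
    · obtain ⟨k, rfl⟩ := hu
      have hk : ¬ 2 ∣ k := fun hk ↦ hx (pow_succ (2 : ℤ) u ▸ mul_dvd_mul_left _ hk)
      exact ⟨u, by omega, k / 2, by unfold line; congr 1; omega⟩
    · obtain ⟨s, hs, q, hq⟩ := ih hu
      exact ⟨s, by omega, q, hq⟩

/-- `H` is what a line of level `s` shows at abscissa `x`, if its phase at abscissa `0` is `Y`. -/
structure IsRuler (Y : ZMod 8) (s : ℕ) (x : ℤ) (H : Half) : Prop where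
  phase : H.phase = Y + ((2 * x / 2 ^ s : ℤ) : ZMod 8)
  landmark : H.landmark ↔ (2 : ℤ) ^ s ∣ 2 * x
  odd : H.odd ↔ s % 2 = 1

theorem eight_eq_zero : (8 : ZMod 8) = 0 := rfl

section Ruler

variable {Y : ZMod 8} {s : ℕ} {x k : ℤ} {H : Half}

theorem IsRuler.phase_eq (h : IsRuler Y s x H) (hk : 2 * x = 2 ^ s * k) : H.phase = Y + k := by
  rw [h.phase, hk, Int.mul_ediv_cancel_left _ (by positivity)]

theorem IsRuler.landmark_of_eq (h : IsRuler Y s x H) (hk : 2 * x = 2 ^ s * k) : H.landmark :=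
  h.landmark.2 ⟨k, hk⟩

theorem IsRuler.shift {o : ℤ} (h : IsRuler Y s (x + o) H) (hk : 2 * o = 2 ^ s * k) :
    IsRuler (Y + k) s x H where
  phase := by
    rw [h.phase, mul_add, hk, Int.add_mul_ediv_left _ _ (by positivity)]
    push_cast
    ring
  landmark := by rw [h.landmark, mul_add, hk, Int.dvd_add_left (Dvd.intro _ rfl)]
  odd := h.odd

end Ruler

/-- The rows of level less than `t` are where the canonical skeleton has them. -/
structure RowsAligned (t : ℕ) (c : ℤ → ℤ → SkeletonCell) : Prop where
  ground : ∀ i j, (c i j).1.ground ↔ j % 2 = 1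
  ruler : ∀ s < t, ∀ q i, IsRuler 0 s i (c i (line s q)).1
  mark : ∀ s < t, ∀ q i, (c i (line s q)).1.mark ↔ (2 * q + 1) % 4 = 1

/-- The rows and the columns of level less than `t` are where the canonical skeleton has them. -/
structure Aligned (t : ℕ) (c : ℤ → ℤ → SkeletonCell) : Prop where
  rows : RowsAligned t c
  cols : RowsAligned t (transposed c)

theorem Aligned.transpose {t : ℕ} {c : ℤ → ℤ → SkeletonCell} (h : Aligned t c) :
    Aligned t (transposed c) :=
  ⟨h.cols, h.rows⟩

theorem walk_of_step {w : ℤ} (hw : 0 < w) {f δ : ℤ → ZMod 8}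
    (step : ∀ i, f (i + 1) = f i + δ (i + 1)) (off : ∀ i, ¬ w ∣ i → δ i = 0) :
    (∀ i, f i = f (w * (i / w))) ∧ ∀ n, f (w * (n + 1)) = f (w * n) + δ (w * (n + 1)) := by
  have block : ∀ (n : ℤ) (d : ℕ), d < w → f (w * n + d) = f (w * n) := by
    intro n d hd
    induction d with
    | zero => simp
    | succ d ih =>
      have hnot : ¬ w ∣ w * n + (d + 1 : ℕ) := by
        rw [Int.dvd_add_right (Dvd.intro _ rfl)]
        exact fun hdvd ↦ (Int.le_of_dvd (by positivity) hdvd).not_gt hd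
      rw [← ih (by omega), ← add_zero (f (w * n + d)), ← off _ hnot, Nat.cast_succ, ← add_assoc,
        step]
  refine ⟨fun i ↦ ?_, fun n ↦ ?_⟩
  · have hmod := Int.emod_nonneg i hw.ne'
    have := block (i / w) (i % w).toNat (by have := Int.emod_lt_of_pos i hw; omega)
    rwa [Int.toNat_of_nonneg hmod, Int.mul_ediv_add_emod] at this
  · have := block n (w - 1).toNat (by omega)
    rw [Int.toNat_of_nonneg (by omega)] at this
    rw [← this, show w * (n + 1) = w * n + (w - 1) + 1 by ring, step]

/-- The phase only changes at landmarks; if they lie at multiples of `w`, and at every odd multiple,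
where moreover the phase is odd, then they lie at every multiple: otherwise two consecutive odd
phases would differ by one. -/
theorem landmark_and_phase_of_odd_multiples {w : ℤ} (hw : 0 < w) {f : ℤ → ZMod 8} {l : ℤ → Bool}
    (step : ∀ i, f (i + 1) = f i + if l (i + 1) then 1 else 0) (off : ∀ i, ¬ w ∣ i → ¬ l i)
    (on : ∀ k, l (w * (2 * k + 1)) ∧ (f (w * (2 * k + 1)) = 1 ∨ f (w * (2 * k + 1)) = 3 ∨
      f (w * (2 * k + 1)) = 5 ∨ f (w * (2 * k + 1)) = 7)) (i : ℤ) :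
    (l i ↔ w ∣ i) ∧ f i = f 0 + ((i / w : ℤ) : ZMod 8) := by
  obtain ⟨floor, next⟩ := walk_of_step (δ := fun i ↦ if l i then 1 else 0) hw step
    fun i hi ↦ if_neg (off i hi)
  have landmarks : ∀ n, l (w * n) := by
    intro n
    rcases Int.even_or_odd' n with ⟨k, rfl | rfl⟩
    · by_contra hl
      have before := next (2 * (k - 1) + 1)
      rw [show 2 * (k - 1) + 1 + 1 = 2 * k by ring, if_neg hl, add_zero] at before
      have after := next (2 * k)
      rw [if_pos (on k).1, before] at after
      have not_both : ∀ y : ZMod 8, (y = 1 ∨ y = 3 ∨ y = 5 ∨ y = 7) →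
          ¬ (y + 1 = 1 ∨ y + 1 = 3 ∨ y + 1 = 5 ∨ y + 1 = 7) := by decide
      exact not_both _ (on (k - 1)).2 (after ▸ (on k).2)
    · exact (on k).1
  have multiples (n : ℤ) : f (w * n) = f 0 + n := by
    have next' (n : ℤ) : f (w * (n + 1)) = f (w * n) + 1 := by rw [next, if_pos (landmarks _)]
    simpa using AddConstMapClass.map_add_int'
      (⟨fun n ↦ f (w * n), next'⟩ : AddConstMap ℤ (ZMod 8) 1 1) 0 n
  refine ⟨⟨fun hl ↦ not_imp_not.1 (off i) hl, ?_⟩, ?_⟩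
  · rintro ⟨n, rfl⟩
    exact landmarks n
  · rw [floor i, multiples]

section Step

variable {c : ℤ → ℤ → SkeletonCell} (h : IsSkeleton c)

include h

theorem IsSkeleton.exists_isRuler_zero (hA : Aligned 0 c) (q : ℤ) :
    ∃ Y : ZMod 8, (Y = 0 ∨ Y = 4) ∧ ∀ i, IsRuler Y 0 i (c i (line 0 q)).1 := by
  have row_ground (i : ℤ) : (c i (line 0 q)).1.ground :=
    (hA.rows.ground i _).2 (by simp [line])
  have col_ground : (c 1 (line 0 q)).2.ground := (hA.cols.ground (line 0 q) 1).2 rfl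
  have step (i : ℤ) : (c (i + 1) (line 0 q)).1.phase = (c i (line 0 q)).1.phase + 2 := by
    rw [(h.right i _).phase, if_pos (row_ground i)]
  have phase_eq (i : ℤ) : (c i (line 0 q)).1.phase = (c 1 (line 0 q)).1.phase + (i - 1) * 2 := by
    simpa using AddConstMapClass.map_add_int'
      (⟨fun i ↦ (c i (line 0 q)).1.phase, step⟩ : AddConstMap ℤ (ZMod 8) 1 2) 1 (i - 1)
  have crossing := (h.cell 1 (line 0 q)).ground_ground (row_ground 1) col_ground
  have sub_two : ∀ y : ZMod 8, y = 2 ∨ y = 6 → y - 2 = 0 ∨ y - 2 = 4 := by decide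
  refine ⟨(c 1 (line 0 q)).1.phase - 2, sub_two _ crossing.row_phase, fun i ↦ ⟨?_, ?_, ?_⟩⟩
  · rw [phase_eq]
    push_cast [pow_zero, Int.ediv_one]
    ring
  · simp [((h.cell i (line 0 q)).row_ground (row_ground i)).2]
  · simp [((h.cell i (line 0 q)).row_ground (row_ground i)).1]

theorem IsSkeleton.halfLevel_line {u : ℕ} (hA : Aligned (u + 1) c) (q k : ℤ) :
    HalfLevel (c (line u k) (line (u + 1) q)) := by
  have hcol : IsRuler 0 u (line (u + 1) q) (c (line u k) (line (u + 1) q)).2 :=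
    hA.cols.ruler u u.lt_succ_self k _
  have hq := two_mul_line_add u 1 q
  refine (h.cell _ _).crossing.halfLevel (hcol.landmark_of_eq hq) ?_
  rw [hcol.phase_eq hq]
  push_cast
  linear_combination (q : ZMod 8) * eight_eq_zero

theorem IsSkeleton.not_landmark_line {s u : ℕ} (hs : s < u) (hA : Aligned (u + 1) c) (q k : ℤ) :
    ¬ (c (line s k) (line (u + 1) q)).1.landmark := by
  have hcol : IsRuler 0 s (line (u + 1) q) (c (line s k) (line (u + 1) q)).2 :=
    hA.cols.ruler s (by omega) k _
  obtain ⟨d, rfl⟩ := Nat.exists_eq_add_of_lt hs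
  have hq : 2 * line (s + d + 1 + 1) q = _ := two_mul_line_add s (d + 2) q
  refine (h.cell _ _).crossing.not_row_landmark (hcol.landmark_of_eq hq) ?_
  rw [hcol.phase_eq hq]
  push_cast
  linear_combination 2 ^ d * (2 * (q : ZMod 8) + 1) * eight_eq_zero

theorem IsSkeleton.exists_isRuler_succ {u : ℕ} (hA : Aligned (u + 1) c) (q : ℤ) :
    ∃ Y : ZMod 8, (Y = 0 ∨ Y = 4) ∧ ∀ i, IsRuler Y (u + 1) i (c i (line (u + 1) q)).1 := by
  set j := line (u + 1) q with hj
  have half (k : ℤ) : HalfLevel (c (line u k) j) := h.halfLevel_line hA q k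
  have off (i : ℤ) (hi : ¬ (2 : ℤ) ^ u ∣ i) : ¬ (c i j).1.landmark := by
    obtain ⟨s, hs, k, rfl⟩ := exists_eq_line_of_not_dvd hi
    exact h.not_landmark_line hs hA q k
  have not_ground (i : ℤ) : ¬ (c i j).1.ground := by
    rw [hA.rows.ground, hj, line, pow_succ, mul_right_comm]
    omega
  have step (i : ℤ) : (c (i + 1) j).1.phase =
      (c i j).1.phase + if (c (i + 1) j).1.landmark then 1 else 0 := by
    rw [(h.right i j).phase, if_neg (not_ground i)]
  have walk := landmark_and_phase_of_odd_multiples (f := fun i ↦ (c i j).1.phase)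
    (by positivity) step off
    fun k ↦ ⟨(half k).row_landmark, (half k).row_phase⟩
  have phase_first : (c (line u 0) j).1.phase = (c 0 j).1.phase + 1 := by
    have := (walk (2 ^ u)).2
    rwa [Int.ediv_self (by positivity), Int.cast_one, show (2 : ℤ) ^ u = line u 0 by
      simp [line]] at this
  have mark_first : (c (line u 0) j).2.mark :=
    (hA.cols.mark u u.lt_succ_self 0 j).2 rfl
  have sub_one : ∀ y : ZMod 8, y + 1 = 1 ∨ y + 1 = 5 → y = 0 ∨ y = 4 := by decide
  refine ⟨(c 0 j).1.phase, sub_one _ (phase_first ▸ (half 0).row_phase_iff.2 mark_first),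
    fun i ↦ ⟨?_, ?_, ?_⟩⟩
  · rw [(walk i).2, pow_succ', Int.mul_ediv_mul_of_pos _ _ two_pos]
  · rw [(walk i).1, pow_succ', mul_dvd_mul_iff_left two_ne_zero]
  · have hcol : (c (line u 0) j).2.odd ↔ u % 2 = 1 := (hA.cols.ruler u u.lt_succ_self 0 j).odd
    rw [h.row_odd_eq i (line u 0), (half 0).odd, Bool.not_eq_true', Bool.eq_false_iff, ne_eq, hcol]
    omega

theorem IsSkeleton.exists_isRuler {t : ℕ} (hA : Aligned t c) (q : ℤ) :
    ∃ Y : ZMod 8, (Y = 0 ∨ Y = 4) ∧ ∀ i, IsRuler Y t i (c i (line t q)).1 := by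
  cases t with
  | zero => exact h.exists_isRuler_zero hA q
  | succ u => exact h.exists_isRuler_succ hA q

/-- The phases of all rows of level `t` agree because their crossings with the column `2 ^ t` read
off the mark of that column. -/
theorem IsSkeleton.exists_shift_isRuler {t : ℕ} (hA : Aligned t c) :
    ∃ o : ℤ, 2 ^ (t + 1) ∣ o ∧ ∀ q i, IsRuler 0 t i (c (i + o) (line t q)).1 := by
  choose Y hY ruler using h.exists_isRuler hA
  have phase_eq (q : ℤ) : (c (2 ^ t) (line t q)).1.phase = Y q + 2 :=
    (ruler q _).phase_eq (mul_comm _ _)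
  have mark_iff (q : ℤ) : Y q = 0 ↔ (c (2 ^ t) 0).2.mark := by
    have add_two : ∀ y : ZMod 8, y = 0 ∨ y = 4 → (y + 2 = 2 ∨ y + 2 = 6) := by decide
    have crossing := (h.cell (2 ^ t) (line t q)).crossing.sameLevel
      ((ruler q _).landmark_of_eq (mul_comm _ _)) (phase_eq q ▸ add_two _ (hY q))
    rw [show (c (2 ^ t) 0).2.mark = (c (2 ^ t) (line t q)).2.mark from
      h.transpose.row_mark_eq 0 (line t q) (2 ^ t), ← crossing.row_phase_iff, phase_eq,
      add_eq_right]
  by_cases hm : (c (2 ^ t) 0).2.mark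
  · refine ⟨0, dvd_zero _, fun q i ↦ ?_⟩
    simpa [(mark_iff q).2 hm] using ruler q i
  · refine ⟨2 ^ (t + 1), dvd_rfl, fun q i ↦ ?_⟩
    have hY4 : Y q = 4 := (hY q).resolve_left (mt (mark_iff q).1 hm)
    have := (ruler q _).shift (x := i) (o := 2 ^ (t + 1)) (k := 4) (by ring)
    rwa [hY4] at this

theorem IsSkeleton.row_mark_iff {t : ℕ} (hrow : ∀ q i, IsRuler 0 t i (c i (line t q)).1)
    (hcol : ∀ q i, IsRuler 0 t i (transposed c i (line t q)).1) (q i : ℤ) :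
    (c i (line t q)).1.mark ↔ (2 * q + 1) % 4 = 1 := by
  have hr := hrow q (line t 0)
  have hc : IsRuler 0 t (line t q) (c (line t 0) (line t q)).2 := hcol 0 (line t q)
  have hk (q : ℤ) : 2 * line t q = 2 ^ t * (2 * (2 * q + 1)) := by unfold line; ring
  have crossing := (h.cell (line t 0) (line t q)).crossing.sameLevel (hr.landmark_of_eq (hk 0))
    (.inl (hr.phase_eq (hk 0)))
  rw [h.row_mark_eq i (line t 0), ← crossing.col_phase_iff, hc.phase_eq (hk q), zero_add,
    show (2 : ZMod 8) = ((2 : ℤ) : ZMod 8) from rfl, ZMod.intCast_eq_intCast_iff]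
  unfold Int.ModEq
  omega

end Step

theorem line_add_of_dvd {s t : ℕ} (hs : s ≤ t) {o : ℤ} (ho : 2 ^ (t + 1) ∣ o) (q : ℤ) :
    ∃ r : ℤ, o = 2 ^ (s + 1) * r ∧ line s q + o = line s (q + r) := by
  obtain ⟨r, rfl⟩ := (pow_dvd_pow 2 (Nat.succ_le_succ hs)).trans ho
  exact ⟨r, rfl, by unfold line; rw [Nat.succ_eq_add_one]; ring⟩

theorem RowsAligned.translate {t : ℕ} {c : ℤ → ℤ → SkeletonCell} (h : RowsAligned t c) {a b : ℤ}
    (ha : 2 ^ (t + 1) ∣ a) (hb : 2 ^ (t + 1) ∣ b) : RowsAligned t (translated a b c) where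
  ground i j := by
    have hb2 : (2 : ℤ) ∣ b := (dvd_pow_self 2 t.succ_ne_zero).trans hb
    unfold translated
    rw [h.ground]
    omega
  ruler s hs q i := by
    obtain ⟨d, rfl⟩ := Nat.exists_eq_add_of_lt hs
    obtain ⟨r, -, hr⟩ := line_add_of_dvd hs.le hb q
    obtain ⟨k, rfl⟩ := ha
    have := (hr ▸ h.ruler s hs (q + r) (i + 2 ^ (s + d + 1 + 1) * k)).shift
      (k := 8 * (2 ^ d * k)) (by ring)
    rwa [Int.cast_mul, Int.cast_ofNat, eight_eq_zero, zero_mul, add_zero] at this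
  mark s hs q i := by
    obtain ⟨r, rfl, hr⟩ := line_add_of_dvd hs.le hb q
    have hr2 : (2 : ℤ) ∣ r := by
      have := (pow_dvd_pow (2 : ℤ) (show s + 2 ≤ t + 1 by omega)).trans hb
      rwa [show s + 2 = s + 1 + 1 from rfl, pow_succ _ (s + 1),
        mul_dvd_mul_iff_left (by positivity)] at this
    unfold translated
    rw [hr, h.mark s hs]
    omega

theorem RowsAligned.succ {t : ℕ} {c : ℤ → ℤ → SkeletonCell} (h : IsSkeleton c)
    (hrows : RowsAligned t c) (hrow : ∀ q i, IsRuler 0 t i (c i (line t q)).1)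
    (hcol : ∀ q i, IsRuler 0 t i (transposed c i (line t q)).1) : RowsAligned (t + 1) c where
  ground := hrows.ground
  ruler s hs := by
    rcases Nat.lt_succ_iff_lt_or_eq.1 hs with hs | rfl
    exacts [hrows.ruler s hs, hrow]
  mark s hs := by
    rcases Nat.lt_succ_iff_lt_or_eq.1 hs with hs | rfl
    exacts [hrows.mark s hs, h.row_mark_iff hrow hcol]

theorem IsSkeleton.exists_aligned_succ {t : ℕ} {c : ℤ → ℤ → SkeletonCell} (h : IsSkeleton c)
    (hA : Aligned t c) : ∃ a b, Aligned (t + 1) (translated a b c) := by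
  obtain ⟨a, ha, hrow⟩ := h.exists_shift_isRuler hA
  obtain ⟨b, hb, hcol⟩ := h.transpose.exists_shift_isRuler hA.transpose
  have move (c : ℤ → ℤ → SkeletonCell) {a b : ℤ} (hb : 2 ^ (t + 1) ∣ b)
      (hc : ∀ q i, IsRuler 0 t i (c (i + a) (line t q)).1) (q i : ℤ) :
      IsRuler 0 t i (translated a b c i (line t q)).1 := by
    obtain ⟨r, -, hr⟩ := line_add_of_dvd le_rfl hb q
    unfold translated
    exact hr ▸ hc (q + r) i
  have hrow' := move c hb hrow
  have hcol' := move (transposed c) ha hcol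
  have h' := h.translate a b
  exact ⟨a, b, .succ h' (hA.rows.translate ha hb) hrow' hcol',
    .succ h'.transpose (hA.cols.translate hb ha) hcol' hrow'⟩

theorem IsSkeleton.exists_rowsAligned_zero {c : ℤ → ℤ → SkeletonCell} (h : IsSkeleton c) :
    ∃ b : ℤ, ∀ a, RowsAligned 0 (translated a b c) := by
  have periodic : Function.Periodic (fun j ↦ (c 0 j).1.ground) 2 := fun j ↦ by
    simp [show j + 2 = j + 1 + 1 by ring, h.row_ground_add_one]
  have ground_iff (b : ℤ) (hb : (c 0 b).1.ground = false) (i j : ℤ) :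
      (c i (j + b)).1.ground ↔ j % 2 = 1 := by
    rw [h.row_ground_eq i 0]
    rcases Int.even_or_odd' j with ⟨k, rfl | rfl⟩
    · have : (c 0 (2 * k + b)).1.ground = (c 0 b).1.ground := by
        simpa [add_comm, mul_comm] using periodic.int_mul k b
      simp [this, hb]
    · have : (c 0 (2 * k + (b + 1))).1.ground = (c 0 (b + 1)).1.ground := by
        simpa [add_comm, mul_comm] using periodic.int_mul k (b + 1)
      rw [add_assoc, add_comm 1 b, this, h.row_ground_add_one, hb]
      simp
  obtain ⟨b, hb⟩ : ∃ b, (c 0 b).1.ground = false := by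
    cases h0 : (c 0 0).1.ground
    · exact ⟨0, h0⟩
    · exact ⟨0 + 1, by rw [h.row_ground_add_one, h0]; rfl⟩
  exact ⟨b, fun a ↦ ⟨fun i j ↦ ground_iff b hb (i + a) j, fun s hs ↦ by omega, fun s hs ↦ by omega⟩⟩

theorem IsSkeleton.exists_aligned {c : ℤ → ℤ → SkeletonCell} (h : IsSkeleton c) (t : ℕ) :
    ∃ a b, Aligned t (translated a b c) := by
  induction t with
  | zero =>
    obtain ⟨b, hb⟩ := h.exists_rowsAligned_zero
    obtain ⟨a, ha⟩ := h.transpose.exists_rowsAligned_zero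
    exact ⟨a, b, hb a, ha b⟩
  | succ t ih =>
    obtain ⟨a, b, hA⟩ := ih
    obtain ⟨a', b', hA'⟩ := (h.translate a b).exists_aligned_succ hA
    refine ⟨a' + a, b' + b, ?_⟩
    convert hA' using 1
    funext i j
    simp [translated, add_assoc]

/-! ### Squares and nodes -/

section Latch

variable {B : ℕ → Prop} [DecidablePred B] {mark behind ahead : ℕ → Bool} {a b w j : ℕ}

theorem behind_eq_mark
    (hbehind : ∀ j, behind (j + 1) = if B (j + 1) then mark (j + 1) else behind j)
    (ha : 0 < a) (hBa : B a) (hab : a ≤ b) (hfree : ∀ j, a < j → j ≤ b → ¬ B j) :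
    behind b = mark a := by
  induction b, hab using Nat.le_induction with
  | base =>
    obtain ⟨a, rfl⟩ := Nat.exists_eq_succ_of_ne_zero ha.ne'
    rw [hbehind, if_pos hBa]
  | succ b hab ih =>
    rw [hbehind, if_neg (hfree _ (by omega) le_rfl), ih fun j h h' ↦ hfree j h (by omega)]

theorem ahead_eq_not_mark
    (hahead : ∀ j, ahead j = if B (j + 1) then !mark (j + 1) else ahead (j + 1))
    (hab : a < b) (hBb : B b) (hfree : ∀ j, a < j → j < b → ¬ B j) : ahead a = !mark b := by
  obtain ⟨d, rfl⟩ := Nat.exists_eq_add_of_lt hab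
  induction d generalizing a with
  | zero => rw [hahead, if_pos (by simpa using hBb)]
  | succ d ih =>
    rw [hahead, if_neg (hfree _ (by omega) (by omega))]
    have key := @ih (a + 1) (by omega) (by convert hBb using 1; omega)
      fun j h h' ↦ hfree j (by omega) (by omega)
    rw [key]
    congr 2
    omega

theorem behind_and_ahead_iff (hw : 0 < w)
    (hbehind : ∀ j, behind (j + 1) = if B (j + 1) then mark (j + 1) else behind j)
    (hahead : ∀ j, ahead j = if B (j + 1) then !mark (j + 1) else ahead (j + 1))
    (hdvd : ∀ j, 0 < j → B j → ∃ n, j = w * n ∧ n % 4 ≠ 2)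
    (hodd : ∀ n, n % 2 = 1 → B (w * n) ∧ (mark (w * n) ↔ n % 4 = 1)) :
    (behind j ∧ ahead j) ↔ j / w % 4 = 1 ∨ j / w % 4 = 2 := by
  have hn : w * (j / w) ≤ j := Nat.mul_div_le j w
  have hn' : j < w * (j / w + 1) := Nat.lt_mul_div_succ j hw
  generalize j / w = n at hn hn' ⊢
  have last (k : ℕ) (hk : k % 2 = 1) (hkn : k ≤ n) (hgap : ∀ l, k < l → l ≤ n → l % 4 = 2) :
      behind j ↔ k % 4 = 1 := by
    rw [← (hodd k hk).2, behind_eq_mark hbehind (Nat.mul_pos hw (by omega)) (hodd k hk).1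
      ((Nat.mul_le_mul_left w hkn).trans hn)]
    intro i hki hij hB
    obtain ⟨l, rfl, hl⟩ := hdvd i (by omega) hB
    exact hl (hgap l (Nat.lt_of_mul_lt_mul_left hki)
      (Nat.lt_succ_iff.1 (Nat.lt_of_mul_lt_mul_left (hij.trans_lt hn'))))
  have next (k : ℕ) (hk : k % 2 = 1) (hkn : n < k) (hgap : ∀ l, n < l → l < k → l % 4 = 2) :
      ahead j ↔ k % 4 ≠ 1 := by
    rw [ne_eq, ← (hodd k hk).2, ahead_eq_not_mark hahead
      (hn'.trans_le (Nat.mul_le_mul_left w hkn)) (hodd k hk).1]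
    · simp
    intro i hji hik hB
    obtain ⟨l, rfl, hl⟩ := hdvd i (by omega) hB
    exact hl (hgap l (Nat.lt_of_mul_lt_mul_left (hn.trans_lt hji)) (Nat.lt_of_mul_lt_mul_left hik))
  obtain h | h | h | h : n % 4 = 0 ∨ n % 4 = 1 ∨ n % 4 = 2 ∨ n % 4 = 3 := by omega
  · rw [next (n + 1) (by omega) (by omega) (by omega)]
    omega
  · rw [last n (by omega) le_rfl (by omega), next (n + 2) (by omega) (by omega) (by omega)]
    omega
  · rw [last (n - 1) (by omega) (by omega) (by omega),
      next (n + 1) (by omega) (by omega) (by omega)]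
    omega
  · rw [last n (by omega) le_rfl (by omega)]
    omega

end Latch

/-- A point of a line of level `2 * r` is on the border of a square of scale `r` if its abscissa is
in `[4 ^ r, 3 * 4 ^ r)` modulo `4 ^ (r + 1)`; this is read off the phase. -/
def Half.IsBorder (H : Half) : Prop :=
  H.odd = false ∧ (H.phase = 2 ∨ H.phase = 3 ∨ H.phase = 4 ∨ H.phase = 5)

instance : DecidablePred Half.IsBorder := fun H ↦ by unfold Half.IsBorder; infer_instance

/-- A line is free at a point if the nearest borders that cross it on both sides of this point face
each other, the marked one behind and the unmarked one ahead. -/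
def Half.IsFree (H : Half) : Prop := H.behind ∧ H.ahead

/-- The cells where a free row crosses a free column. -/
def IsNode (p : SkeletonCell) : Prop := p.1.IsFree ∧ p.2.IsFree

/-- The signals of a row from a cell `p` to its right neighbour `q`: they are emitted by the
vertical borders. -/
structure SignalsRight (p q : SkeletonCell) : Prop where
  behind : q.1.behind = if q.2.IsBorder then q.2.mark else p.1.behind
  ahead : p.1.ahead = if q.2.IsBorder then !q.2.mark else q.1.ahead

/-- The rows of all levels are where the canonical skeleton has them, and carry signals. -/
structure RowsCanonical (c : ℕ → ℕ → SkeletonCell) : Prop where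
  ruler : ∀ s q i : ℕ, IsRuler 0 s i (c i (2 ^ s * (2 * q + 1))).1
  mark : ∀ s q i : ℕ, (c i (2 ^ s * (2 * q + 1))).1.mark ↔ (2 * q + 1) % 4 = 1
  signals : ∀ i j, SignalsRight (c i j) (c (i + 1) j)

/-- A quarter plane of cells with the rows and the columns of the canonical skeleton. -/
structure IsHierarchy (c : ℕ → ℕ → SkeletonCell) : Prop where
  rows : RowsCanonical c
  cols : RowsCanonical fun i j ↦ (c j i).swap

theorem IsHierarchy.transpose {c : ℕ → ℕ → SkeletonCell} (h : IsHierarchy c) :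
    IsHierarchy fun i j ↦ (c j i).swap :=
  ⟨h.cols, h.rows⟩

/-- The squares of scale `r` have the projections `[4 ^ r, 3 * 4 ^ r)` modulo `4 ^ (r + 1)`. -/
def InSpan (r i : ℕ) : Prop := i / 4 ^ r % 4 = 1 ∨ i / 4 ^ r % 4 = 2

/-- The scale of a coordinate: the scale of the smallest squares whose projections contain it. -/
def HasScale (r i : ℕ) : Prop := InSpan r i ∧ ∀ s < r, ¬ InSpan s i

instance (r : ℕ) : DecidablePred (InSpan r) := fun i ↦ by unfold InSpan; infer_instance

instance (r : ℕ) : DecidablePred (HasScale r) := fun i ↦ by unfold HasScale; infer_instance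

theorem HasScale.unique {r s i : ℕ} (hr : HasScale r i) (hs : HasScale s i) : r = s :=
  le_antisymm (not_lt.1 fun h ↦ hr.2 s h hs.1) (not_lt.1 fun h ↦ hs.2 r h hr.1)

theorem InSpan.pos {r i : ℕ} (h : InSpan r i) : 0 < i := by
  rcases i.eq_zero_or_pos with rfl | hi
  · simp [InSpan] at h
  · exact hi

theorem InSpan.exists_hasScale {r i : ℕ} (h : InSpan r i) : ∃ s, HasScale s i :=
  have hex : ∃ s, InSpan s i := ⟨r, h⟩
  ⟨Nat.find hex, Nat.find_spec hex, fun _ ↦ Nat.find_min hex⟩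

theorem intCast_zmod_eight_eq_iff {n : ℤ} {k : ℕ} (hk : k < 8) : (n : ZMod 8) = k ↔ n % 8 = k := by
  rw [← Int.cast_natCast, ZMod.intCast_eq_intCast_iff']
  omega

theorem IsRuler.isBorder_iff {s i : ℕ} {H : Half} (h : IsRuler 0 s i H) :
    H.IsBorder ↔ s % 2 = 0 ∧ (i / 2 ^ s % 4 = 1 ∨ i / 2 ^ s % 4 = 2) := by
  have hphase : H.phase = (((2 * i / 2 ^ s : ℕ) : ℤ) : ZMod 8) := by
    rw [h.phase, zero_add]
    push_cast
    rfl
  have hodd : H.odd = false ↔ s % 2 = 0 := by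
    rw [← Bool.not_eq_true, h.odd]
    omega
  have hhalf : i / 2 ^ s = 2 * i / 2 ^ s / 2 := by
    rw [Nat.div_div_eq_div_mul, mul_comm (2 ^ s), Nat.mul_div_mul_left _ _ two_pos]
  have phase_iff {k : ℕ} (hk : k < 8) : H.phase = k ↔ 2 * i / 2 ^ s % 8 = k := by
    rw [hphase, intCast_zmod_eight_eq_iff hk]
    omega
  have h2 := phase_iff (k := 2) (by omega)
  have h3 := phase_iff (k := 3) (by omega)
  have h4 := phase_iff (k := 4) (by omega)
  have h5 := phase_iff (k := 5) (by omega)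
  push_cast at h2 h3 h4 h5
  rw [Half.IsBorder, hodd, h2, h3, h4, h5, hhalf]
  omega

section Hierarchy

variable {c : ℕ → ℕ → SkeletonCell} {i j r s : ℕ}

theorem four_pow_eq (r : ℕ) : 4 ^ r = 2 ^ (2 * r) := by rw [pow_mul]; rfl

theorem RowsCanonical.isBorder_iff (h : RowsCanonical c) (hj : 0 < j) :
    (c i j).1.IsBorder ↔ ∃ r q, j = 4 ^ r * (2 * q + 1) ∧ InSpan r i := by
  constructor
  · intro hB
    obtain ⟨s, _, ⟨q, rfl⟩, rfl⟩ := Nat.exists_eq_two_pow_mul_odd hj.ne'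
    obtain ⟨hs, hi⟩ := (h.ruler s q i).isBorder_iff.1 hB
    obtain ⟨r, rfl⟩ := Nat.dvd_of_mod_eq_zero hs
    exact ⟨r, q, by rw [four_pow_eq], by rwa [InSpan, four_pow_eq]⟩
  · rintro ⟨r, q, rfl, hi⟩
    rw [InSpan, four_pow_eq] at hi
    rw [four_pow_eq, (h.ruler (2 * r) q i).isBorder_iff]
    exact ⟨by omega, hi⟩

theorem RowsCanonical.isBorder_iff_of_hasScale (h : RowsCanonical c) (hi : HasScale r i)
    (hj : 0 < j) :
    (c i j).1.IsBorder ↔ ∃ d q, j = 4 ^ r * (4 ^ d * (2 * q + 1)) ∧ InSpan (r + d) i := by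
  rw [h.isBorder_iff hj]
  constructor
  · rintro ⟨s, q, rfl, hs⟩
    obtain ⟨d, rfl⟩ := Nat.exists_eq_add_of_le (not_lt.1 fun hlt ↦ hi.2 s hlt hs)
    exact ⟨d, q, by rw [pow_add, mul_assoc], hs⟩
  · rintro ⟨d, q, rfl, hd⟩
    exact ⟨r + d, q, by rw [pow_add, mul_assoc], hd⟩

theorem IsHierarchy.col_isFree_iff (h : IsHierarchy c) (hi : HasScale r i) :
    (c i j).2.IsFree ↔ InSpan r j := by
  have hborder {j : ℕ} (hj : 0 < j) := h.rows.isBorder_iff_of_hasScale hi hj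
  refine behind_and_ahead_iff (w := 4 ^ r) (B := fun j ↦ (c i j).1.IsBorder)
    (mark := fun j ↦ (c i j).1.mark) (behind := fun j ↦ (c i j).2.behind)
    (ahead := fun j ↦ (c i j).2.ahead) (by positivity)
    (fun j ↦ (h.cols.signals j i).behind) (fun j ↦ (h.cols.signals j i).ahead) ?_ ?_
  · intro j hj hB
    obtain ⟨d, q, rfl, -⟩ := (hborder hj).1 hB
    refine ⟨_, rfl, ?_⟩
    cases d with
    | zero => omega
    | succ d => rw [pow_succ', mul_assoc]; omega
  · intro n hn
    obtain ⟨q, rfl⟩ : ∃ q, n = 2 * q + 1 := ⟨n / 2, by omega⟩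
    refine ⟨(hborder (by positivity)).2 ⟨0, q, by rw [pow_zero, one_mul], hi.1⟩, ?_⟩
    exact four_pow_eq r ▸ h.rows.mark (2 * r) q i

theorem IsHierarchy.isNode_iff (h : IsHierarchy c) (hi : HasScale r i) (hj : HasScale s j) :
    IsNode (c i j) ↔ r = s := by
  have hrow : (c i j).1.IsFree ↔ InSpan s i := h.transpose.col_isFree_iff hj
  rw [IsNode, hrow, h.col_isFree_iff hi]
  constructor
  · rintro ⟨hsi, hrj⟩
    exact le_antisymm (not_lt.1 fun hlt ↦ hi.2 s hlt hsi) (not_lt.1 fun hlt ↦ hj.2 r hlt hrj)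
  · rintro rfl
    exact ⟨hi.1, hj.1⟩

/-- The position of `i` relative to the left end `4 ^ r` of the projection of a square of scale `r`,
modulo the period `4 ^ (r + 1)`. -/
def offset (r i : ℕ) : ℕ := (i + 3 * 4 ^ r) % 4 ^ (r + 1)

theorem IsHierarchy.row_isBorder_iff (h : IsHierarchy c) (hi : HasScale r i) (hj : InSpan r j) :
    (c i j).1.IsBorder ↔ offset r j = 0 := by
  have hr : 0 < 4 ^ r := by positivity
  rw [h.rows.isBorder_iff_of_hasScale hi hj.pos, offset, ← Nat.dvd_iff_mod_eq_zero, pow_succ]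
  constructor
  · rintro ⟨d, q, rfl, -⟩
    rw [InSpan, Nat.mul_div_cancel_left _ hr] at hj
    rw [mul_comm 3, ← mul_add]
    refine mul_dvd_mul_left _ ?_
    cases d with
    | zero => omega
    | succ d => rw [pow_succ', mul_assoc] at hj; omega
  · rintro ⟨k, hk⟩
    obtain ⟨k, rfl⟩ : ∃ l, k = l + 1 := ⟨k - 1, by cases k <;> simp_all⟩
    refine ⟨0, 2 * k, ?_, hi.1⟩
    rw [pow_zero]
    linarith

theorem IsHierarchy.col_isBorder_iff (h : IsHierarchy c) (hi : InSpan r i) (hj : HasScale r j) :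
    (c i j).2.IsBorder ↔ offset r i = 0 :=
  h.transpose.row_isBorder_iff hj hi

end Hierarchy

section Scale

variable {r R k a b n : ℕ}

theorem inSpan_add_mul_iff (hr : r ≤ R) (i k : ℕ) :
    InSpan r (i + 4 ^ (R + 1) * k) ↔ InSpan r i := by
  obtain ⟨d, rfl⟩ := Nat.exists_eq_add_of_le hr
  have hdiv : (i + 4 ^ (r + d + 1) * k) / 4 ^ r = i / 4 ^ r + 4 * (4 ^ d * k) := by
    rw [show 4 ^ (r + d + 1) * k = 4 ^ r * (4 * (4 ^ d * k)) by ring,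
      Nat.add_mul_div_left _ _ (by positivity)]
  rw [InSpan, InSpan, hdiv]
  omega

theorem hasScale_add_mul_iff (r i k : ℕ) : HasScale r (i + 4 ^ (r + 1) * k) ↔ HasScale r i := by
  refine and_congr (inSpan_add_mul_iff le_rfl i k) (forall₂_congr fun s hs ↦ ?_)
  rw [inSpan_add_mul_iff hs.le]

theorem inSpan_of_le_of_lt {i : ℕ} (hi : 4 ^ r ≤ i) (hi' : i < 3 * 4 ^ r) : InSpan r i := by
  have h1 : 1 ≤ i / 4 ^ r := (Nat.one_le_div_iff (by positivity)).2 hi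
  have h2 : i / 4 ^ r < 3 := (Nat.div_lt_iff_lt_mul (by positivity)).2 hi'
  unfold InSpan
  omega

theorem hasScale_add_pow_sub_one (hk : k ≤ r) : HasScale r (4 ^ r + (4 ^ k - 1)) := by
  have hkr : 4 ^ k ≤ 4 ^ r := Nat.pow_le_pow_right (by norm_num) hk
  have hk1 : 0 < 4 ^ k := by positivity
  refine ⟨inSpan_of_le_of_lt (by omega) (by omega), fun s hs ↦ ?_⟩
  obtain ⟨d, rfl⟩ := Nat.exists_eq_add_of_lt hs
  rw [add_comm, ← mul_one (4 ^ (s + d + 1)), add_assoc, pow_add, mul_assoc, InSpan,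
    Nat.add_mul_div_left _ _ (by positivity), pow_succ']
  rcases le_or_gt k s with hks | hks
  · have : 4 ^ k ≤ 4 ^ s := Nat.pow_le_pow_right (by norm_num) hks
    rw [Nat.div_eq_of_lt (by omega)]
    omega
  · obtain ⟨e, rfl⟩ := Nat.exists_eq_add_of_lt hks
    have hdiv : (4 ^ (s + e + 1) - 1) / 4 ^ s = 4 * 4 ^ e - 1 := by
      rw [add_assoc, pow_add, pow_succ', Nat.mul_sub_div 0 _ _ (by positivity), Nat.zero_div]
    have he : 0 < 4 ^ e := by positivity
    rw [hdiv]
    omega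

theorem hasScale_four_pow (r : ℕ) : HasScale r (4 ^ r) := by
  simpa using hasScale_add_pow_sub_one r.zero_le

theorem infinite_setOf_hasScale (r : ℕ) : {y | HasScale r (4 ^ r + y)}.Infinite :=
  Set.infinite_of_injective_forall_mem (f := fun k ↦ 4 ^ (r + 1) * k)
    (mul_right_injective₀ (by positivity))
    fun k ↦ (hasScale_add_mul_iff r (4 ^ r) k).2 (hasScale_four_pow r)

theorem lt_count_hasScale (hk : k ≤ r) :
    k < Nat.count (fun y ↦ HasScale r (4 ^ r + y)) (4 ^ k) := by
  induction k with
  | zero =>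
    rw [pow_zero, ← zero_add 1, Nat.count_succ, add_zero, if_pos (hasScale_four_pow r)]
    omega
  | succ k ih =>
    obtain ⟨m, hm⟩ : ∃ m, 4 ^ (k + 1) = m + 1 := Nat.exists_eq_succ_of_ne_zero (by positivity)
    have hlast : HasScale r (4 ^ r + m) := by simpa [hm] using hasScale_add_pow_sub_one hk
    have hkm : 4 ^ k ≤ m := by
      have : 0 < 4 ^ k := by positivity
      omega
    rw [hm, Nat.count_succ, if_pos hlast]
    have := Nat.count_monotone (fun y ↦ HasScale r (4 ^ r + y)) hkm
    have := ih (by omega)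
    omega

/-- The `a`-th coordinate of scale `n` in the projections of the squares of scale `n`. -/
noncomputable def scaleCoord (n a : ℕ) : ℕ := 4 ^ n + Nat.nth (fun y ↦ HasScale n (4 ^ n + y)) a

theorem hasScale_scaleCoord (n a : ℕ) : HasScale n (scaleCoord n a) :=
  Nat.nth_mem_of_infinite (infinite_setOf_hasScale n) a

theorem le_scaleCoord (n a : ℕ) : 4 ^ n ≤ scaleCoord n a := Nat.le_add_right _ _

theorem scaleCoord_lt (ha : a ≤ n) : scaleCoord n a < 2 * 4 ^ n := by
  have hlt := Nat.nth_lt_of_lt_count (lt_count_hasScale ha)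
  have hle : 4 ^ a ≤ 4 ^ n := Nat.pow_le_pow_right (by norm_num) ha
  unfold scaleCoord
  omega

theorem scaleCoord_strictMono (n : ℕ) : StrictMono (scaleCoord n) := fun _ _ hab ↦
  Nat.add_lt_add_left (Nat.nth_strictMono (infinite_setOf_hasScale n) hab) _

theorem not_hasScale_of_scaleCoord_lt {i : ℕ} (hi : scaleCoord n a < i)
    (hi' : i < scaleCoord n (a + 1)) : ¬ HasScale n i := by
  intro hs
  obtain ⟨y, rfl⟩ := Nat.exists_eq_add_of_le ((le_scaleCoord n a).trans hi.le)
  exact (Nat.le_nth_of_lt_nth_succ (Nat.lt_of_add_lt_add_left hi') hs).not_gt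
    (Nat.lt_of_add_lt_add_left hi)

theorem offset_add (r y : ℕ) : offset r (4 ^ r + y) = y % 4 ^ (r + 1) := by
  rw [offset, show 4 ^ r + y + 3 * 4 ^ r = y + 4 ^ (r + 1) by ring, Nat.add_mod_right]

theorem offset_scaleCoord_eq_zero_iff (ha : a ≤ n) : offset n (scaleCoord n a) = 0 ↔ a = 0 := by
  have hlt := scaleCoord_lt ha
  have hzero : scaleCoord n 0 = 4 ^ n := by
    simp [scaleCoord, Nat.nth_zero_of_zero, hasScale_four_pow]
  have hoffset : offset n (scaleCoord n a) = scaleCoord n a - scaleCoord n 0 := by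
    rw [hzero, scaleCoord, offset_add, Nat.add_sub_cancel_left, Nat.mod_eq_of_lt]
    rw [scaleCoord] at hlt
    rw [pow_succ]
    omega
  rw [hoffset, Nat.sub_eq_zero_iff_le, (scaleCoord_strictMono n).le_iff_le, Nat.le_zero]

theorem hasScale_add_offset_iff (r i : ℕ) : HasScale r (4 ^ r + offset r i) ↔ HasScale r i := by
  have hperiod : 4 ^ r + offset r i + 4 ^ (r + 1) * ((i + 3 * 4 ^ r) / 4 ^ (r + 1)) =
      i + 4 ^ (r + 1) * 1 := by
    rw [offset, add_assoc, Nat.mod_add_div]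
    ring
  rw [← hasScale_add_mul_iff r i 1, ← hperiod, hasScale_add_mul_iff]

theorem offset_succ {i : ℕ} (h : offset r (i + 1) ≠ 0) : offset r (i + 1) = offset r i + 1 := by
  unfold offset at h ⊢
  rw [add_right_comm] at h ⊢
  rw [Nat.add_mod_eq_ite] at h ⊢
  have hone : 1 % 4 ^ (r + 1) = 1 := Nat.mod_eq_of_lt (Nat.one_lt_pow (by omega) (by norm_num))
  have hlt := Nat.mod_lt (i + 3 * 4 ^ r) (show 0 < 4 ^ (r + 1) by positivity)
  rw [hone] at h ⊢
  split_ifs at h ⊢ <;> omega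

/-- The number of coordinates of scale `r` between the left end of the period of `i`, excluded, and
`i`, included. -/
def index (r i : ℕ) : ℕ := Nat.count (fun y ↦ HasScale r (4 ^ r + (y + 1))) (offset r i)

theorem index_succ {i : ℕ} (h : offset r (i + 1) ≠ 0) :
    index r (i + 1) = index r i + if HasScale r (i + 1) then 1 else 0 := by
  rw [index, offset_succ h, Nat.count_succ]
  simp only [← offset_succ h, hasScale_add_offset_iff, index]

theorem index_eq_zero_iff {i : ℕ} (h : HasScale r i) : index r i = 0 ↔ offset r i = 0 := by
  constructor
  · intro h0
    by_contra hne
    obtain ⟨y, hy⟩ := Nat.exists_eq_succ_of_ne_zero hne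
    rw [index, hy, Nat.count_succ, if_pos (by rwa [← Nat.succ_eq_add_one, ← hy,
      hasScale_add_offset_iff])] at h0
    omega
  · intro h0
    rw [index, h0, Nat.count_zero]

/-- The scale of `i`, for the coordinates that have one (`0` for the others). -/
noncomputable def scale (i : ℕ) : ℕ := sInf {r | InSpan r i}

theorem HasScale.scale_eq {i : ℕ} (h : HasScale r i) : scale i = r :=
  le_antisymm (Nat.sInf_le h.1) (not_lt.1 fun hlt ↦
    h.2 _ hlt (Nat.sInf_mem (s := {r | InSpan r i}) ⟨r, h.1⟩))

end Scale

/-! ### Quadrants carried by the squares -/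

open Filter

theorem exists_eventually_eq {ι A : Type*} [Finite A] (f : ℕ → ι → A) :
    ∃ x : ι → A, ∀ p, ∀ᶠ n in hyperfilter ℕ, f n p = x p := by
  have point (p : ι) : ∃ y, ∀ᶠ n in hyperfilter ℕ, f n p = y := by
    obtain ⟨y, hy⟩ := ((hyperfilter ℕ).map (f · p)).eq_pure_of_finite
    refine ⟨y, ?_⟩
    have : {y} ∈ (hyperfilter ℕ).map (f · p) := hy ▸ Ultrafilter.mem_pure.2 rfl
    exact this
  choose x hx using point
  exact ⟨x, hx⟩

theorem exists_limit {ι A : Type*} [Add ι] [One ι] [Finite A] {P : ι → ι → A → A → A → Prop}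
    (f : ℕ → ι → ι → A)
    (hf : ∀ i j, ∀ᶠ n in hyperfilter ℕ, P i j (f n i j) (f n (i + 1) j) (f n i (j + 1))) :
    ∃ x : ι → ι → A, (∀ i j, ∀ᶠ n in hyperfilter ℕ, f n i j = x i j) ∧
      ∀ i j, P i j (x i j) (x (i + 1) j) (x i (j + 1)) := by
  obtain ⟨x, hx⟩ := exists_eventually_eq fun n (p : ι × ι) ↦ f n p.1 p.2
  refine ⟨fun i j ↦ x (i, j), fun i j ↦ hx (i, j), fun i j ↦ ?_⟩
  obtain ⟨n, hP, h₁, h₂, h₃⟩ := ((hf i j).and ((hx (i, j)).and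
    ((hx (i + 1, j)).and (hx (i, j + 1))))).exists
  simpa only [h₁, h₂, h₃] using hP

theorem eventually_hyperfilter_ge (n : ℕ) : ∀ᶠ m in hyperfilter ℕ, n ≤ m :=
  Nat.hyperfilter_le_atTop (eventually_ge_atTop n)

/-- Local rules for filling a quadrant with symbols of `C`: `left` and `bottom` tell the symbols of
the two edges, `ok` the allowed symbols, `hor` and `ver` the allowed neighbours. -/
structure TileSystem (C : Type*) where
  left : C → Prop
  bottom : C → Prop
  ok : C → Prop
  hor : C → C → Prop
  ver : C → C → Prop

/-- The rules of `S` with the axes exchanged. -/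
def TileSystem.transpose {C : Type*} (S : TileSystem C) : TileSystem C :=
  ⟨S.bottom, S.left, S.ok, S.ver, S.hor⟩

/-- The symbol `x` may stand at the position `(a, b)` of a quadrant, with the right neighbour `y`
and the upper neighbour `z`. -/
structure TileSystem.IsPatch {C : Type*} (S : TileSystem C) (a b : ℕ) (x y z : C) : Prop where
  ok : S.ok x
  left : S.left x ↔ a = 0
  bottom : S.bottom x ↔ b = 0
  hor : S.hor x y
  ver : S.ver x z

/-- The quadrant `g`, indexed by column and row, obeys the rules of `S`. -/
def IsQuadrant {C : Type*} (S : TileSystem C) (g : ℕ → ℕ → C) : Prop :=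
  ∀ a b, S.IsPatch a b (g a b) (g (a + 1) b) (g a (b + 1))

/-- A skeleton cell whose row and column carry symbols of a quadrant. -/
structure Cell (C : Type*) where
  skeleton : SkeletonCell
  row : C
  col : C

/-- The cell `p` with its axes exchanged. -/
def Cell.swap {C : Type*} (p : Cell C) : Cell C := ⟨p.skeleton.swap, p.col, p.row⟩

instance : Finite Half :=
  Finite.of_injective
    (fun H : Half ↦ (H.phase, H.landmark, H.ground, H.mark, H.odd, H.behind, H.ahead))
    fun H K h ↦ by cases H; cases K; simp_all

instance {C : Type*} [Finite C] : Finite (Cell C) :=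
  Finite.of_injective (fun p : Cell C ↦ (p.skeleton, p.row, p.col))
    fun p q h ↦ by cases p; cases q; simp_all

section Cell

variable {C : Type*} (S : TileSystem C)

/-- The rules for a single cell. The symbol at a node is on an edge of the quadrant if the node is
on a border of its square. -/
structure Cell.IsValid (p : Cell C) : Prop where
  isCell : IsCell p.skeleton
  col_eq_row : IsNode p.skeleton → p.col = p.row
  left : IsNode p.skeleton → (p.skeleton.2.IsBorder ↔ S.left p.row)
  bottom : IsNode p.skeleton → (p.skeleton.1.IsBorder ↔ S.bottom p.row)
  ok : IsNode p.skeleton → S.ok p.row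

/-- The cell `q` may stand to the right of the cell `p`: a row carries its symbol unchanged from one
node to the next. -/
structure Cell.IsRight (p q : Cell C) : Prop where
  step : StepRight p.skeleton q.skeleton
  signals : SignalsRight p.skeleton q.skeleton
  node : IsNode q.skeleton → q.skeleton.2.IsBorder ∨ S.hor p.row q.row
  not_node : ¬ IsNode q.skeleton → q.row = p.row

/-- The rules for a cell `p`, its right neighbour `q` and its upper neighbour `u`. -/
structure Cell.IsPatch (p q u : Cell C) : Prop where
  valid : p.IsValid S
  right : p.IsRight S q
  above : p.swap.IsRight S.transpose u.swap

/-- A plane of cells, indexed by column and row, that obeys all local rules. -/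
def IsTiling {ι : Type*} [Add ι] [One ι] (S : TileSystem C) (c : ι → ι → Cell C) : Prop :=
  ∀ i j, (c i j).IsPatch S (c (i + 1) j) (c i (j + 1))

variable {S} {p q u : Cell C}

theorem Cell.IsValid.swap (h : p.IsValid S) : p.swap.IsValid S.transpose := by
  have isNode (hp : IsNode p.swap.skeleton) : IsNode p.skeleton := ⟨hp.2, hp.1⟩
  refine ⟨h.isCell.swap, fun hp ↦ (h.col_eq_row (isNode hp)).symm, fun hp ↦ ?_, fun hp ↦ ?_,
    fun hp ↦ ?_⟩ <;> have col_eq := h.col_eq_row (isNode hp)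
  · exact (h.bottom (isNode hp)).trans (col_eq ▸ Iff.rfl)
  · exact (h.left (isNode hp)).trans (col_eq ▸ Iff.rfl)
  · exact (col_eq ▸ h.ok (isNode hp) : S.ok p.col)

theorem Cell.IsPatch.swap (h : p.IsPatch S q u) : p.swap.IsPatch S.transpose u.swap q.swap :=
  ⟨h.valid.swap, h.above, h.right⟩

theorem IsTiling.transpose {ι : Type*} [Add ι] [One ι] {c : ι → ι → Cell C} (h : IsTiling S c) :
    IsTiling S.transpose fun i j ↦ (c j i).swap :=
  fun i j ↦ (h j i).swap

theorem IsTiling.isSkeleton {c : ℤ → ℤ → Cell C} (h : IsTiling S c) :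
    IsSkeleton fun i j ↦ (c i j).skeleton :=
  ⟨fun i j ↦ (h i j).valid.isCell, fun i j ↦ (h i j).right.step, fun i j ↦ (h i j).above.step⟩

end Cell

section Extraction

variable {C : Type*} {S : TileSystem C}

theorem RowsAligned.ruler_and_mark_nat {t s : ℕ} {c : ℤ → ℤ → SkeletonCell} (h : RowsAligned t c)
    (hs : s < t) (q i : ℕ) :
    IsRuler 0 s i (c i (2 ^ s * (2 * q + 1) : ℕ)).1 ∧
      ((c i (2 ^ s * (2 * q + 1) : ℕ)).1.mark ↔ (2 * q + 1) % 4 = 1) := by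
  have hline : ((2 ^ s * (2 * q + 1) : ℕ) : ℤ) = line s q := by
    push_cast
    rfl
  rw [hline]
  refine ⟨h.ruler s hs q i, (h.mark s hs q i).trans ?_⟩
  omega

theorem RowsCanonical.of_eventually {c : ℕ → ℤ → ℤ → SkeletonCell} {x : ℕ → ℕ → SkeletonCell}
    (hc : ∀ n, RowsAligned n (c n)) (hx : ∀ i j : ℕ, ∀ᶠ n in hyperfilter ℕ, c n i j = x i j)
    (signals : ∀ i j, SignalsRight (x i j) (x (i + 1) j)) : RowsCanonical x := by
  have canonical (s q i : ℕ) : IsRuler 0 s i (x i (2 ^ s * (2 * q + 1))).1 ∧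
      ((x i (2 ^ s * (2 * q + 1))).1.mark ↔ (2 * q + 1) % 4 = 1) := by
    obtain ⟨n, hn, hs⟩ := ((hx i _).and (eventually_hyperfilter_ge (s + 1))).exists
    exact hn ▸ (hc n).ruler_and_mark_nat hs q i
  exact ⟨fun s q i ↦ (canonical s q i).1, fun s q i ↦ (canonical s q i).2, signals⟩

theorem IsTiling.translate {c : ℤ → ℤ → Cell C} (h : IsTiling S c) (a b : ℤ) :
    IsTiling S (translated a b c) := fun i j ↦ by
  simpa [translated, add_right_comm] using h (i + a) (j + b)

theorem IsTiling.exists_isHierarchy [Finite C] {c : ℤ → ℤ → Cell C} (h : IsTiling S c) :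
    ∃ x : ℕ → ℕ → Cell C, IsTiling S x ∧ IsHierarchy fun i j ↦ (x i j).skeleton := by
  choose a b hA using h.isSkeleton.exists_aligned
  obtain ⟨x, hx, htiling⟩ := exists_limit (P := fun _ _ ↦ Cell.IsPatch S)
    (fun n (i j : ℕ) ↦ translated (a n) (b n) c i j)
    fun i j ↦ .of_forall fun n ↦ by simpa using h.translate (a n) (b n) i j
  refine ⟨x, htiling, ?_, ?_⟩
  · exact .of_eventually (fun n ↦ (hA n).rows)
      (fun i j ↦ (hx i j).mono fun n hn ↦ congrArg Cell.skeleton hn)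
      fun i j ↦ (htiling i j).right.signals
  · exact .of_eventually (fun n ↦ (hA n).cols)
      (fun i j ↦ (hx j i).mono fun n hn ↦ congrArg (Prod.swap ∘ Cell.skeleton) hn)
      fun i j ↦ (htiling j i).above.signals

theorem eq_of_forall_succ_eq {α : Type*} {f : ℕ → α} {a b : ℕ} (hab : a ≤ b)
    (h : ∀ i, a ≤ i → i < b → f (i + 1) = f i) : f b = f a := by
  induction b, hab using Nat.le_induction with
  | base => rfl
  | succ b hab ih =>
    rw [h b hab b.lt_succ_self, ih fun i hi hib ↦ h i hi (hib.trans b.lt_succ_self)]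

variable {c : ℕ → ℕ → Cell C} {n a b : ℕ}

theorem isNode_scaleCoord (hc : IsHierarchy fun i j ↦ (c i j).skeleton) :
    IsNode (c (scaleCoord n a) (scaleCoord n b)).skeleton :=
  (hc.isNode_iff (hasScale_scaleCoord n a) (hasScale_scaleCoord n b)).2 rfl

theorem IsTiling.hor_scaleCoord (h : IsTiling S c) (hc : IsHierarchy fun i j ↦ (c i j).skeleton)
    (ha : a < n) : S.hor (c (scaleCoord n a) (scaleCoord n b)).row
      (c (scaleCoord n (a + 1)) (scaleCoord n b)).row := by
  set j := scaleCoord n b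
  have hlt : scaleCoord n (a + 1) < 2 * 4 ^ n := scaleCoord_lt ha
  obtain ⟨i, hi⟩ : ∃ i, scaleCoord n (a + 1) = i + 1 :=
    Nat.exists_eq_succ_of_ne_zero (Nat.ne_zero_of_lt (scaleCoord_strictMono n a.lt_succ_self))
  have hai : scaleCoord n a ≤ i := by
    have := scaleCoord_strictMono n (Nat.lt_add_one a)
    omega
  have carried : (c i j).row = (c (scaleCoord n a) j).row := by
    refine eq_of_forall_succ_eq (f := fun i ↦ (c i j).row) hai fun k hak hki ↦
      (h k j).right.not_node fun hnode ↦ ?_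
    have hspan : InSpan n (k + 1) := inSpan_of_le_of_lt
      ((le_scaleCoord n a).trans (hak.trans k.le_succ)) (by omega)
    obtain ⟨s, hs⟩ := hspan.exists_hasScale
    obtain rfl := (hc.isNode_iff hs (hasScale_scaleCoord n b)).1 hnode
    exact not_hasScale_of_scaleCoord_lt (Nat.lt_succ_iff.2 hak) (by omega) hs
  have hborder : ¬ (c (i + 1) j).skeleton.2.IsBorder := by
    rw [← hi, hc.col_isBorder_iff (hasScale_scaleCoord n _).1 (hasScale_scaleCoord n b),
      offset_scaleCoord_eq_zero_iff ha]
    exact a.succ_ne_zero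
  have := ((h i j).right.node (hi ▸ isNode_scaleCoord hc)).resolve_left hborder
  rwa [carried, ← hi] at this

theorem IsTiling.isPatch_scaleCoord (h : IsTiling S c)
    (hc : IsHierarchy fun i j ↦ (c i j).skeleton) (ha : a < n) (hb : b < n) :
    S.IsPatch a b (c (scaleCoord n a) (scaleCoord n b)).row
      (c (scaleCoord n (a + 1)) (scaleCoord n b)).row
      (c (scaleCoord n a) (scaleCoord n (b + 1))).row := by
  have isNode (a b : ℕ) := isNode_scaleCoord (n := n) (a := a) (b := b) hc
  have scale_a := hasScale_scaleCoord n a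
  have scale_b := hasScale_scaleCoord n b
  have valid := (h (scaleCoord n a) (scaleCoord n b)).valid
  refine ⟨valid.ok (isNode a b), ?_, ?_, h.hor_scaleCoord hc ha, ?_⟩
  · rw [← valid.left (isNode a b), hc.col_isBorder_iff scale_a.1 scale_b,
      offset_scaleCoord_eq_zero_iff ha.le]
  · rw [← valid.bottom (isNode a b), hc.row_isBorder_iff scale_a scale_b.1,
      offset_scaleCoord_eq_zero_iff hb.le]
  · have ver : S.ver (c (scaleCoord n a) (scaleCoord n b)).col
        (c (scaleCoord n a) (scaleCoord n (b + 1))).col :=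
      h.transpose.hor_scaleCoord (a := b) (b := a) hc.transpose hb
    rwa [valid.col_eq_row (isNode a b), (h _ _).valid.col_eq_row (isNode a (b + 1))] at ver

theorem IsTiling.exists_isQuadrant [Finite C] {c : ℤ → ℤ → Cell C} (h : IsTiling S c) :
    ∃ g, IsQuadrant S g := by
  obtain ⟨x, hx, hc⟩ := h.exists_isHierarchy
  obtain ⟨g, -, hg⟩ := exists_limit (P := S.IsPatch)
    (fun n a b ↦ (x (scaleCoord n a) (scaleCoord n b)).row) fun a b ↦ by
      filter_upwards [eventually_hyperfilter_ge (a + 1), eventually_hyperfilter_ge (b + 1)]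
        with n ha hb
      exact hx.isPatch_scaleCoord hc ha hb
  exact ⟨g, hg⟩

end Extraction

/-! ### The canonical skeleton -/

section Signals

variable (B : ℕ → Prop) [DecidablePred B] (mark : ℕ → Bool)

/-- The signal that a row receives from the last border met, `B` and `mark` being the borders that
cross this row and their marks. -/
def behindSignal : ℕ → Bool
  | 0 => false
  | i + 1 => if B (i + 1) then mark (i + 1) else behindSignal i

/-- The signal that a row receives from the next border; `sInf ∅ = 0` if there is none. -/
noncomputable def aheadSignal (i : ℕ) : Bool := !mark (sInf {k | i < k ∧ B k})

theorem aheadSignal_eq (i : ℕ) : aheadSignal B mark i =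
    if B (i + 1) then !mark (i + 1) else aheadSignal B mark (i + 1) := by
  split_ifs with h
  · have hinf : sInf {k | i < k ∧ B k} = i + 1 :=
      IsLeast.csInf_eq ⟨⟨i.lt_succ_self, h⟩, fun k hk ↦ hk.1⟩
    rw [aheadSignal, hinf]
  · have hset : {k | i < k ∧ B k} = {k | i + 1 < k ∧ B k} := by
      ext k
      refine and_congr_left fun hk ↦ ⟨fun hlt ↦ lt_of_le_of_ne hlt ?_, fun hlt ↦ by omega⟩
      rintro rfl
      exact h hk
    rw [aheadSignal, aheadSignal, hset]

end Signals

/-- What the line `j` of the canonical skeleton shows at abscissa `i`, without the signals. -/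
def canonicalBase (i j : ℕ) : Half where
  phase := (2 * i / 2 ^ padicValNat 2 j : ℕ)
  landmark := 2 ^ padicValNat 2 j ∣ 2 * i
  ground := j % 2 = 1
  mark := j / 2 ^ padicValNat 2 j % 4 = 1
  odd := padicValNat 2 j % 2 = 1
  behind := false
  ahead := false

/-- What the line `j` of the canonical skeleton shows at abscissa `i`. -/
noncomputable def canonicalHalf (i j : ℕ) : Half where
  __ := canonicalBase i j
  behind := behindSignal (fun k ↦ (canonicalBase j k).IsBorder) (fun k ↦ (canonicalBase j k).mark) i
  ahead := aheadSignal (fun k ↦ (canonicalBase j k).IsBorder) (fun k ↦ (canonicalBase j k).mark) i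

/-- The cell at the crossing of the column `i` and the row `j` of the canonical skeleton. -/
noncomputable def canonicalCell (i j : ℕ) : SkeletonCell := (canonicalHalf i j, canonicalHalf j i)

theorem padicValNat_two_pow_mul_odd (s q : ℕ) : padicValNat 2 (2 ^ s * (2 * q + 1)) = s := by
  rw [padicValNat.mul (by positivity) (by omega), padicValNat.prime_pow,
    padicValNat.eq_zero_of_not_dvd (by omega), add_zero]

section Canonical

variable {i j s d a b : ℕ} {p : SkeletonCell}

theorem isRuler_canonicalHalf (i : ℕ) (hj : padicValNat 2 j = s) :
    IsRuler 0 s i (canonicalHalf i j) where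
  phase := by
    rw [zero_add, canonicalHalf, canonicalBase, hj, ← Int.cast_natCast]
    push_cast
    rfl
  landmark := by
    rw [canonicalHalf, canonicalBase, hj, decide_eq_true_iff]
    norm_cast
  odd := by rw [canonicalHalf, canonicalBase, hj, decide_eq_true_iff]

theorem canonicalHalf_mark_iff (i s q : ℕ) :
    (canonicalHalf i (2 ^ s * (2 * q + 1))).mark ↔ (2 * q + 1) % 4 = 1 := by
  rw [canonicalHalf, canonicalBase, padicValNat_two_pow_mul_odd, decide_eq_true_iff,
    Nat.mul_div_cancel_left _ (by positivity)]

theorem signalsRight_canonicalCell (i j : ℕ) :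
    SignalsRight (canonicalCell i j) (canonicalCell (i + 1) j) :=
  ⟨rfl, aheadSignal_eq (fun k ↦ (canonicalBase j k).IsBorder) (fun k ↦ (canonicalBase j k).mark) i⟩

theorem rowsCanonical_canonicalCell : RowsCanonical canonicalCell where
  ruler s q i := isRuler_canonicalHalf i (padicValNat_two_pow_mul_odd s q)
  mark s q i := canonicalHalf_mark_iff i s q
  signals := signalsRight_canonicalCell

theorem isHierarchy_canonicalCell : IsHierarchy canonicalCell :=
  ⟨rowsCanonical_canonicalCell, rowsCanonical_canonicalCell⟩

theorem IsRuler.landmark_of_natCast_eq {x k : ℕ} {H : Half} (h : IsRuler 0 s x H)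
    (hk : 2 * x = 2 ^ s * k) : H.landmark :=
  h.landmark_of_eq (k := k) (by exact_mod_cast hk)

theorem IsRuler.phase_eq_iff {x k n : ℕ} {H : Half} (h : IsRuler 0 s x H)
    (hk : 2 * x = 2 ^ s * k) (hn : n < 8) : H.phase = n ↔ k % 8 = n := by
  rw [h.phase_eq (k := k) (by exact_mod_cast hk), zero_add, intCast_zmod_eight_eq_iff hn]
  omega

theorem SameLevel.of_isRuler (hrow : IsRuler 0 s (2 ^ s * (2 * a + 1) : ℕ) p.1)
    (hcol : IsRuler 0 s (2 ^ s * (2 * b + 1) : ℕ) p.2) (hmark : p.1.mark ↔ (2 * b + 1) % 4 = 1)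
    (hmark' : p.2.mark ↔ (2 * a + 1) % 4 = 1) : SameLevel p := by
  have h (a : ℕ) : 2 * (2 ^ s * (2 * a + 1)) = 2 ^ s * (2 * (2 * a + 1)) := mul_left_comm _ _ _
  have row2 := hrow.phase_eq_iff (h a) (n := 2) (by omega)
  have row6 := hrow.phase_eq_iff (h a) (n := 6) (by omega)
  have col2 := hcol.phase_eq_iff (h b) (n := 2) (by omega)
  have col6 := hcol.phase_eq_iff (h b) (n := 6) (by omega)
  push_cast at row2 row6 col2 col6
  refine ⟨hrow.landmark_of_natCast_eq (h a), hcol.landmark_of_natCast_eq (h b), ?_, ?_, ?_, ?_,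
    ?_⟩
  · rw [row2, row6]; omega
  · rw [col2, col6]; omega
  · rw [Bool.eq_iff_iff, hrow.odd, hcol.odd]
  · rw [row2, hmark']; omega
  · rw [col2, hmark]; omega

theorem HalfLevel.of_isRuler (hrow : IsRuler 0 (s + 1) (2 ^ s * (2 * a + 1) : ℕ) p.1)
    (hcol : IsRuler 0 s (2 ^ (s + 1) * (2 * b + 1) : ℕ) p.2)
    (hmark : p.2.mark ↔ (2 * a + 1) % 4 = 1) : HalfLevel p := by
  have ha : 2 * (2 ^ s * (2 * a + 1)) = 2 ^ (s + 1) * (2 * a + 1) := by ring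
  have hb : 2 * (2 ^ (s + 1) * (2 * b + 1)) = 2 ^ s * (4 * (2 * b + 1)) := by ring
  have row1 := hrow.phase_eq_iff ha (n := 1) (by omega)
  have row3 := hrow.phase_eq_iff ha (n := 3) (by omega)
  have row5 := hrow.phase_eq_iff ha (n := 5) (by omega)
  have row7 := hrow.phase_eq_iff ha (n := 7) (by omega)
  have col4 := hcol.phase_eq_iff hb (n := 4) (by omega)
  push_cast at row1 row3 row5 row7 col4
  refine ⟨hrow.landmark_of_natCast_eq ha, hcol.landmark_of_natCast_eq hb, ?_, ?_, ?_, ?_⟩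
  · rw [row1, row3, row5, row7]; omega
  · rw [col4]; omega
  · rw [Bool.eq_iff_iff, Bool.not_eq_true', Bool.eq_false_iff, ne_eq, hrow.odd, hcol.odd]; omega
  · rw [row1, row5, hmark]; omega

theorem FineLevel.of_isRuler (hrow : IsRuler 0 (s + (d + 2)) (2 ^ s * (2 * a + 1) : ℕ) p.1)
    (hcol : IsRuler 0 s (2 ^ (s + (d + 2)) * (2 * b + 1) : ℕ) p.2) : FineLevel p := by
  have hb : 2 * (2 ^ (s + (d + 2)) * (2 * b + 1)) = 2 ^ s * (8 * (2 ^ d * (2 * b + 1))) := by ring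
  refine ⟨?_, hcol.landmark_of_natCast_eq hb, ?_⟩
  · rw [hrow.landmark]
    have hdvd : ¬ 2 ^ (s + (d + 2)) ∣ 2 * (2 ^ s * (2 * a + 1)) := by
      rw [show 2 ^ (s + (d + 2)) = 2 * (2 ^ s * (2 * 2 ^ d)) by ring,
        mul_dvd_mul_iff_left two_ne_zero, mul_dvd_mul_iff_left (by positivity)]
      intro h
      have := (Dvd.intro _ rfl).trans h
      omega
    exact_mod_cast hdvd
  · have := hcol.phase_eq_iff hb (n := 0) (by omega)
    push_cast at this
    rw [this]
    omega

theorem isCrossing_canonicalCell_of_le (s d a b : ℕ) :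
    IsCrossing (canonicalCell (2 ^ s * (2 * a + 1)) (2 ^ (s + d) * (2 * b + 1))) := by
  have hrow := isRuler_canonicalHalf (2 ^ s * (2 * a + 1)) (padicValNat_two_pow_mul_odd (s + d) b)
  have hcol := isRuler_canonicalHalf (2 ^ (s + d) * (2 * b + 1)) (padicValNat_two_pow_mul_odd s a)
  have hmark := canonicalHalf_mark_iff (2 ^ s * (2 * a + 1)) (s + d) b
  have hmark' := canonicalHalf_mark_iff (2 ^ (s + d) * (2 * b + 1)) s a
  match d with
  | 0 => exact .inl (.of_isRuler hrow hcol hmark hmark')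
  | 1 => exact .inr (.inl (.of_isRuler hrow hcol hmark'))
  | d + 2 => exact .inr (.inr (.inl (.of_isRuler hrow hcol)))

theorem isCrossing_canonicalCell (hi : 0 < i) (hj : 0 < j) : IsCrossing (canonicalCell i j) := by
  obtain ⟨s, _, ⟨a, rfl⟩, rfl⟩ := Nat.exists_eq_two_pow_mul_odd hi.ne'
  obtain ⟨t, _, ⟨b, rfl⟩, rfl⟩ := Nat.exists_eq_two_pow_mul_odd hj.ne'
  rcases le_total s t with hst | hst <;> obtain ⟨d, rfl⟩ := Nat.exists_eq_add_of_le hst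
  · exact isCrossing_canonicalCell_of_le s d a b
  · exact (isCrossing_canonicalCell_of_le t d b a).swap

theorem canonicalHalf_ground_iff : (canonicalHalf i j).ground ↔ j % 2 = 1 := decide_eq_true_iff

theorem padicValNat_two_eq_zero (hj : j % 2 = 1) : padicValNat 2 j = 0 :=
  padicValNat.eq_zero_of_not_dvd (by omega)

theorem not_odd_and_landmark_of_ground (h : (canonicalHalf i j).ground) :
    ¬ (canonicalHalf i j).odd ∧ (canonicalHalf i j).landmark := by
  have ruler := isRuler_canonicalHalf i (padicValNat_two_eq_zero (canonicalHalf_ground_iff.1 h))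
  simp [ruler.odd, ruler.landmark]

theorem isCell_canonicalCell (hi : 0 < i) (hj : 0 < j) : IsCell (canonicalCell i j) where
  crossing := isCrossing_canonicalCell hi hj
  row_ground := not_odd_and_landmark_of_ground
  col_ground := not_odd_and_landmark_of_ground
  ground_ground hrow hcol := by
    have hj := canonicalHalf_ground_iff.1 hrow
    have hi := canonicalHalf_ground_iff.1 hcol
    obtain ⟨a, rfl⟩ : ∃ a, i = 2 ^ 0 * (2 * a + 1) := ⟨i / 2, by omega⟩
    obtain ⟨b, rfl⟩ : ∃ b, j = 2 ^ 0 * (2 * b + 1) := ⟨j / 2, by omega⟩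
    exact .of_isRuler (isRuler_canonicalHalf _ (padicValNat_two_eq_zero hj))
      (isRuler_canonicalHalf _ (padicValNat_two_eq_zero hi)) (canonicalHalf_mark_iff _ 0 b)
      (canonicalHalf_mark_iff _ 0 a)

theorem stepRight_canonicalCell (hj : 0 < j) :
    StepRight (canonicalCell i j) (canonicalCell (i + 1) j) where
  ground := rfl
  mark := rfl
  odd := rfl
  col_ground := by
    rw [Bool.eq_iff_iff, Bool.not_eq_true', Bool.eq_false_iff, ne_eq, canonicalCell, canonicalCell,
      canonicalHalf_ground_iff, canonicalHalf_ground_iff]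
    omega
  phase := by
    simp only [canonicalCell, canonicalHalf, canonicalBase, decide_eq_true_eq]
    split_ifs with hodd hdvd
    · rw [padicValNat_two_eq_zero hodd]
      push_cast [pow_zero, Nat.div_one]
      ring
    all_goals
      obtain ⟨s, hs⟩ := Nat.exists_eq_succ_of_ne_zero
        (dvd_iff_padicValNat_ne_zero hj.ne' |>.1 (show 2 ∣ j by omega))
      rw [hs, pow_succ', Nat.mul_div_mul_left _ _ two_pos, Nat.mul_div_mul_left _ _ two_pos,
        Nat.succ_div]
      rw [hs, pow_succ', mul_dvd_mul_iff_left two_ne_zero] at hdvd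
      simp [hdvd]

end Canonical

section CanonicalTiling

variable {C : Type*} {S : TileSystem C} {g : ℕ → ℕ → C} {r s R i j : ℕ}

/-- The canonical skeleton in which every square carries a corner of the quadrant `g`. -/
noncomputable def canonicalTiling (g : ℕ → ℕ → C) (i j : ℕ) : Cell C where
  skeleton := canonicalCell i j
  row := g (index (scale j) i) (index (scale j) j)
  col := g (index (scale i) i) (index (scale i) j)

theorem IsQuadrant.transpose (hg : IsQuadrant S g) : IsQuadrant S.transpose fun a b ↦ g b a :=
  fun a b ↦ ⟨(hg b a).ok, (hg b a).bottom, (hg b a).left, (hg b a).ver, (hg b a).hor⟩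

theorem isBorder_canonicalCell_iff (hi : HasScale r i) (hj : HasScale r j) :
    (canonicalCell i j).2.IsBorder ↔ index r i = 0 := by
  rw [isHierarchy_canonicalCell.col_isBorder_iff hi.1 hj, index_eq_zero_iff hi]

theorem isValid_canonicalTiling (hg : IsQuadrant S g) (hi : HasScale r i) (hj : HasScale s j) :
    (canonicalTiling g i j).IsValid S := by
  have eq_of_node (h : IsNode (canonicalCell i j)) : r = s :=
    (isHierarchy_canonicalCell.isNode_iff hi hj).1 h
  refine ⟨isCell_canonicalCell hi.1.pos hj.1.pos, fun h ↦ ?_, fun h ↦ ?_, fun h ↦ ?_,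
    fun _ ↦ (hg _ _).ok⟩ <;> obtain rfl := eq_of_node h
  · rw [canonicalTiling, hi.scale_eq, hj.scale_eq]
  · exact (isBorder_canonicalCell_iff hi hj).trans (hj.scale_eq ▸ (hg _ _).left.symm)
  · exact (isBorder_canonicalCell_iff hj hi).trans (hj.scale_eq ▸ (hg _ _).bottom.symm)

theorem hasScale_of_offset_eq_zero (h : offset r i = 0) : HasScale r i := by
  rw [← hasScale_add_offset_iff, h]
  exact hasScale_four_pow r

theorem isRight_canonicalTiling (hg : IsQuadrant S g) (hi : HasScale r (i + 1))
    (hj : HasScale s j) :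
    (canonicalTiling g i j).IsRight S (canonicalTiling g (i + 1) j) := by
  have isNode_iff := isHierarchy_canonicalCell.isNode_iff hi hj
  refine ⟨stepRight_canonicalCell hj.1.pos, signalsRight_canonicalCell i j, fun h ↦ ?_, fun h ↦ ?_⟩
  · obtain rfl := isNode_iff.1 h
    refine or_iff_not_imp_left.2 fun hborder ↦ ?_
    have hoffset : offset r (i + 1) ≠ 0 :=
      mt (isHierarchy_canonicalCell.col_isBorder_iff hi.1 hj).2 hborder
    rw [canonicalTiling, canonicalTiling, hj.scale_eq, index_succ hoffset, if_pos hi]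
    exact (hg _ _).hor
  · have hscale : ¬ HasScale s (i + 1) := fun hs ↦ h (isNode_iff.2 (hi.unique hs))
    rw [canonicalTiling, canonicalTiling, hj.scale_eq,
      index_succ (mt hasScale_of_offset_eq_zero hscale), if_neg hscale, add_zero]

theorem isPatch_canonicalTiling (hg : IsQuadrant S g) (hi : 4 ^ R ≤ i) (hi' : i + 1 < 3 * 4 ^ R)
    (hj : 4 ^ R ≤ j) (hj' : j + 1 < 3 * 4 ^ R) :
    (canonicalTiling g i j).IsPatch S (canonicalTiling g (i + 1) j)
      (canonicalTiling g i (j + 1)) := by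
  obtain ⟨_, hscale⟩ := (inSpan_of_le_of_lt hi (by omega)).exists_hasScale
  obtain ⟨_, hscale'⟩ := (inSpan_of_le_of_lt (hi.trans i.le_succ) hi').exists_hasScale
  obtain ⟨_, kscale⟩ := (inSpan_of_le_of_lt hj (by omega)).exists_hasScale
  obtain ⟨_, kscale'⟩ := (inSpan_of_le_of_lt (hj.trans j.le_succ) hj').exists_hasScale
  exact ⟨isValid_canonicalTiling hg hscale kscale, isRight_canonicalTiling hg hscale' kscale,
    isRight_canonicalTiling hg.transpose kscale' hscale⟩

theorem exists_isTiling_of_isQuadrant [Finite C] (hg : IsQuadrant S g) :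
    ∃ c : ℤ → ℤ → Cell C, IsTiling S c := by
  obtain ⟨c, -, hc⟩ := exists_limit (P := fun _ _ ↦ Cell.IsPatch S)
    (fun n (i j : ℤ) ↦ canonicalTiling g (2 * 4 ^ n + i).toNat (2 * 4 ^ n + j).toNat)
    fun i j ↦ by
      filter_upwards [eventually_hyperfilter_ge (i.natAbs + j.natAbs + 1)] with n hn
      have hpow : n < 4 ^ n := Nat.lt_pow_self (by norm_num)
      have hcast : ((4 ^ n : ℕ) : ℤ) = 4 ^ n := by norm_cast
      have succ (i : ℤ) (hi : i.natAbs < n) :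
          (2 * 4 ^ n + (i + 1)).toNat = (2 * 4 ^ n + i).toNat + 1 := by omega
      rw [succ i (by omega), succ j (by omega)]
      apply isPatch_canonicalTiling (R := n) hg <;> omega
  exact ⟨c, hc⟩

theorem exists_isTiling_iff [Finite C] :
    (∃ c : ℤ → ℤ → Cell C, IsTiling S c) ↔ ∃ g, IsQuadrant S g :=
  ⟨fun ⟨_, hc⟩ ↦ hc.exists_isQuadrant, fun ⟨_, hg⟩ ↦ exists_isTiling_of_isQuadrant hg⟩

end CanonicalTiling

/-! ### Machines -/

open StateTransition

theorem not_dom_eval_iff {σ : Type*} (f : σ → Option σ) (a : σ) :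
    ¬ (eval f a).Dom ↔ ∃ c : ℕ → σ, c 0 = a ∧ ∀ t, f (c t) = some (c (t + 1)) := by
  refine ⟨fun ha ↦ ?_, ?_⟩
  · have continues (b) (hb : Reaches f a b) : ∃ b', f b = some b' :=
      Option.ne_none_iff_exists'.1 fun h ↦ ha (Part.dom_iff_mem.2 ⟨b, mem_eval.2 ⟨hb, h⟩⟩)
    let c (t : ℕ) : σ := (fun b ↦ (f b).getD b)^[t] a
    have step (t : ℕ) (hc : Reaches f a (c t)) : f (c t) = some (c (t + 1)) := by
      obtain ⟨b, hb⟩ := continues _ hc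
      simp only [c, Function.iterate_succ_apply']
      exact hb.trans (by simp only [c] at hb; rw [hb, Option.getD_some])
    have reaches (t : ℕ) : Reaches f a (c t) := by
      induction t with
      | zero => exact .refl
      | succ t ih => exact ih.tail (step t ih)
    exact ⟨c, rfl, fun t ↦ step t (reaches t)⟩
  · rintro ⟨c, rfl, hc⟩ h
    obtain ⟨b, hb⟩ := Part.dom_iff_mem.1 h
    obtain ⟨reaches, halts⟩ := mem_eval.1 hb
    have : ∃ t, b = c t := by
      clear hb halts
      induction reaches with
      | refl => exact ⟨0, rfl⟩
      | tail _ hstep ih =>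
        obtain ⟨t, rfl⟩ := ih
        exact ⟨t + 1, Option.some_injective _ (hstep.symm.trans (hc t))⟩
    obtain ⟨t, rfl⟩ := this
    exact Option.some_ne_none _ ((hc t).symm.trans halts)

/-- A machine with states `Q` on a tape with cells `0, 1, 2, …` and contents `G`: depending on the
state and the content of the cell `0` it halts or chooses the next state and a local rule, which is
applied to all cells simultaneously. The rule sees `none` to the left of the cell `0`. -/
abbrev Machine (Q G : Type*) := Q → G → Option (Q × (Option G → G → G → G))

/-- The content of the left neighbour of a cell. -/
def leftOf {G : Type*} (S : ℕ → G) : ℕ → Option G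
  | 0 => none
  | a + 1 => some (S a)

/-- The tape obtained from `S` by the local rule `u`. -/
def updateTape {G : Type*} (u : Option G → G → G → G) (S : ℕ → G) (a : ℕ) : G :=
  u (leftOf S a) (S a) (S (a + 1))

/-- One step of a machine, on pairs of a state and a tape. -/
def Machine.step {Q G : Type*} (m : Machine Q G) (c : Q × (ℕ → G)) : Option (Q × (ℕ → G)) :=
  (m c.1 (c.2 0)).map fun p ↦ (p.1, updateTape p.2 c.2)

/-- The symbol written at position `(a, t)` of a quadrant that records a run: the state at time `t`,
the contents at time `t` of the cell `0` and of the cell `a` with its neighbours, and whether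
`t = 0`. -/
structure Record (Q G : Type*) where
  state : Q
  head : G
  left : Option G
  content : G
  right : G
  initial : Bool

instance {Q G : Type*} [Finite Q] [Finite G] : Finite (Record Q G) :=
  Finite.of_injective
    (fun s : Record Q G ↦ (s.state, s.head, s.left, s.content, s.right, s.initial))
    fun s t h ↦ by cases s; cases t; simp_all

/-- The quadrants obeying these rules record the infinite runs of `m` from the state `q` and a tape
that is constant from the cell `L` on. The counter, which is only used in the bottom row, is the
column number, cut off at `L`. -/
def Machine.tileSystem {Q G : Type*} (m : Machine Q G) (q : Q) (L : ℕ) (S : ℕ → G) :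
    TileSystem (Record Q G × Fin (L + 1)) where
  left c := c.1.left = none
  bottom c := c.1.initial = true
  ok c := (c.1.left = none → c.1.head = c.1.content) ∧
    (c.1.initial = true → c.1.state = q ∧ c.1.content = S c.2 ∧ (c.1.left = none → (c.2 : ℕ) = 0))
  hor c d := d.1.state = c.1.state ∧ d.1.head = c.1.head ∧ c.1.right = d.1.content ∧
    d.1.left = some c.1.content ∧ (d.1.initial = true → (d.2 : ℕ) = min ((c.2 : ℕ) + 1) L)
  ver c d := ∃ p ∈ m c.1.state c.1.head, d.1.state = p.1 ∧
    d.1.content = p.2 c.1.left c.1.content c.1.right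

section tileSystem

variable {Q G : Type*} {m : Machine Q G} {q : Q} {L : ℕ} {S : ℕ → G}

theorem apply_min_of_eventually_const (hS : ∀ a, L ≤ a → S a = S L) (a : ℕ) :
    S (min a L) = S a := by
  rcases le_total a L with h | h
  · rw [min_eq_left h]
  · rw [min_eq_right h, hS a h]

theorem exists_run_of_isQuadrant (hS : ∀ a, L ≤ a → S a = S L)
    {g : ℕ → ℕ → Record Q G × Fin (L + 1)} (hg : IsQuadrant (m.tileSystem q L S) g) :
    ∃ c : ℕ → Q × (ℕ → G), c 0 = (q, S) ∧ ∀ t, m.step (c t) = some (c (t + 1)) := by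
  have state_eq (a t) : (g a t).1.state = (g 0 t).1.state := by
    induction a with
    | zero => rfl
    | succ a ih => exact (hg a t).hor.1.trans ih
  have head_eq (a t) : (g a t).1.head = (g 0 t).1.content := by
    induction a with
    | zero => exact (hg 0 t).ok.1 ((hg 0 t).left.2 rfl)
    | succ a ih => exact (hg a t).hor.2.1.trans ih
  have left_eq (a t) : (g a t).1.left = leftOf (fun a ↦ (g a t).1.content) a := by
    cases a with
    | zero => exact (hg 0 t).left.2 rfl
    | succ a => exact (hg a t).hor.2.2.2.1
  have initial (a) : (g a 0).1.initial = true := (hg a 0).bottom.2 rfl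
  have counter_eq (a) : ((g a 0).2 : ℕ) = min a L := by
    induction a with
    | zero => simpa using ((hg 0 0).ok.2 (initial 0)).2.2 ((hg 0 0).left.2 rfl)
    | succ a ih =>
      rw [(hg a 0).hor.2.2.2.2 (initial (a + 1)), ih]
      omega
  refine ⟨fun t ↦ ((g 0 t).1.state, fun a ↦ (g a t).1.content), Prod.ext ?_ (funext fun a ↦ ?_),
    fun t ↦ ?_⟩
  · exact ((hg 0 0).ok.2 (initial 0)).1
  · refine ((hg a 0).ok.2 (initial a)).2.1.trans ?_
    rw [counter_eq, apply_min_of_eventually_const hS]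
  · obtain ⟨p, hp, hstate, -⟩ := (hg 0 t).ver
    rw [head_eq] at hp
    refine Option.map_eq_some_iff.2 ⟨p, hp, Prod.ext hstate.symm (funext fun a ↦ ?_)⟩
    obtain ⟨p', hp', -, hcontent⟩ := (hg a t).ver
    rw [state_eq, head_eq] at hp'
    obtain rfl : p = p' := Option.some_injective _ (hp.symm.trans hp')
    rw [left_eq, (hg a t).hor.2.2.1] at hcontent
    exact hcontent.symm

theorem exists_isQuadrant_of_run (hS : ∀ a, L ≤ a → S a = S L) {c : ℕ → Q × (ℕ → G)}
    (hc₀ : c 0 = (q, S)) (hc : ∀ t, m.step (c t) = some (c (t + 1))) :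
    ∃ g, IsQuadrant (m.tileSystem q L S) g := by
  have leftOf_eq_none (S : ℕ → G) (a : ℕ) : leftOf S a = none ↔ a = 0 := by
    cases a <;> simp [leftOf]
  refine ⟨fun a t ↦ (⟨(c t).1, (c t).2 0, leftOf (c t).2 a, (c t).2 a, (c t).2 (a + 1),
    decide (t = 0)⟩, ⟨min a L, by omega⟩), fun a t ↦ ⟨⟨fun h ↦ ?_, fun h ↦ ?_⟩, ?_, ?_, ?_, ?_⟩⟩
  · rw [(leftOf_eq_none _ _).1 h]
  · obtain rfl : t = 0 := of_decide_eq_true h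
    refine ⟨by simp only [hc₀], by simp only [hc₀, apply_min_of_eventually_const hS], fun h ↦ ?_⟩
    simp [(leftOf_eq_none _ _).1 h]
  · exact leftOf_eq_none _ _
  · exact decide_eq_true_iff
  · exact ⟨rfl, rfl, rfl, rfl, fun _ ↦ by simp only; omega⟩
  · obtain ⟨p, hp, hnext⟩ := Option.map_eq_some_iff.1 (hc t)
    exact ⟨p, hp, by simp only [← hnext], by simp only [← hnext]; rfl⟩

theorem exists_isTiling_tileSystem_iff [Finite Q] [Finite G] (hS : ∀ a, L ≤ a → S a = S L) :
    (∃ c : ℤ → ℤ → Cell (Record Q G × Fin (L + 1)), IsTiling (m.tileSystem q L S) c) ↔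
      ¬ (eval m.step (q, S)).Dom := by
  rw [exists_isTiling_iff, not_dom_eval_iff]
  exact ⟨fun ⟨_, hg⟩ ↦ exists_run_of_isQuadrant hS hg,
    fun ⟨_, hc₀, hc⟩ ↦ exists_isQuadrant_of_run hS hc₀ hc⟩

end tileSystem

/-! ### Primitive recursion with values in a finite type -/

/-- A function to a finite type, which need not be encoded, is primitive recursive: each of its
fibers is. -/
def PrimrecFibers {α A : Type*} [Primcodable α] (f : α → A) : Prop :=
  ∀ y, PrimrecPred fun x ↦ f x = y

section PrimrecFibers

variable {α β A B : Type*} [Primcodable α] [Primcodable β]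

theorem primrecPred_const (p : Prop) : PrimrecPred fun _ : α ↦ p := by
  classical exact primrecPred_iff_primrec_decide.2 (Primrec.const _)

theorem primrecPred_exists_finite [Finite A] {P : A → α → Prop} (hP : ∀ y, PrimrecPred (P y)) :
    PrimrecPred fun x ↦ ∃ y, P y x := by
  have := Fintype.ofFinite A
  have exists_mem (l : List A) : PrimrecPred fun x ↦ ∃ y ∈ l, P y x := by
    induction l with
    | nil => exact (primrecPred_const False).of_eq fun x ↦ by simp
    | cons y l ih => exact ((hP y).or ih).of_eq fun x ↦ by simp
  exact (exists_mem Finset.univ.toList).of_eq fun x ↦ by simp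

theorem PrimrecFibers.pred [Finite A] {f : α → A} (hf : PrimrecFibers f) (p : A → Prop) :
    PrimrecPred fun x ↦ p (f x) :=
  (primrecPred_exists_finite fun y ↦ (hf y).and (primrecPred_const (p y))).of_eq fun x ↦ by simp

theorem PrimrecFibers.postcomp [Finite A] {f : α → A} (hf : PrimrecFibers f) (φ : A → B) :
    PrimrecFibers fun x ↦ φ (f x) :=
  fun y ↦ hf.pred (φ · = y)

theorem PrimrecFibers.precomp {f : α → A} (hf : PrimrecFibers f) {g : β → α} (hg : Primrec g) :
    PrimrecFibers fun x ↦ f (g x) :=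
  fun y ↦ (hf y).comp hg

theorem PrimrecFibers.prodMk {f : α → A} {g : α → B} (hf : PrimrecFibers f)
    (hg : PrimrecFibers g) : PrimrecFibers fun x ↦ (f x, g x) :=
  fun y ↦ ((hf y.1).and (hg y.2)).of_eq fun _ ↦ by rw [Prod.ext_iff]

theorem primrecFibers_pi {ι : Type*} [Finite ι] {g : α → ι → A}
    (hg : ∀ i, PrimrecFibers fun x ↦ g x i) : PrimrecFibers g := fun y ↦
  (primrecPred_exists_finite fun i ↦ (hg i (y i)).not).not.of_eq fun x ↦ by
    simp [funext_iff]

theorem primrecFibers_of_primrecPred {p : α → Prop} (hp : PrimrecPred p) : PrimrecFibers p := by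
  intro y
  by_cases hy : y
  · exact hp.of_eq fun x ↦ by simp [hy]
  · exact hp.not.of_eq fun x ↦ by simp [hy]

end PrimrecFibers

/-! ### A finite machine with an undecidable halting problem -/

open Turing

section restrict

variable {Q G : Type*} (m : Machine Q G) (T : Set Q) (hT : ∀ q ∈ T, ∀ g, ∀ p ∈ m q g, p.1 ∈ T)

/-- The machine `m` on a set `T` of states that it does not leave. -/
def Machine.restrict : Machine T G := fun q g ↦
  (m q g).pmap (fun p hp ↦ (⟨p.1, hp⟩, p.2)) (hT q q.2 g)

theorem Machine.dom_eval_restrict_iff (q : T) (S : ℕ → G) :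
    (eval (m.restrict T hT).step (q, S)).Dom ↔ (eval m.step (q.1, S)).Dom := by
  let incl (c : T × (ℕ → G)) : Q × (ℕ → G) := (c.1.1, c.2)
  refine (tr_eval_dom ((fun_respects (tr := incl)).2 fun ⟨q, S⟩ ↦ ?_) rfl).symm
  cases h : m q (S 0) with
  | none =>
    have : m.restrict T hT q (S 0) = none := Option.pmap_eq_none_iff.2 h
    simp [Machine.step, this, h, FRespects, incl]
  | some p =>
    have : m.restrict T hT q (S 0) = some (⟨p.1, hT q q.2 _ p h⟩, p.2) :=
      Option.pmap_eq_some_iff.2 ⟨p, hT q q.2 _ p h, h, rfl⟩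
    simp only [Machine.step, this, Option.map_some, FRespects]
    exact .single (by simp [Machine.step, h, incl])

end restrict

section ofTM2

variable {K : Type*} {Γ : K → Type*} {Λ σ : Type*}

/-- The tape that holds the stacks `S`. -/
def stackTape (S : ∀ k, List (Γ k)) (a : ℕ) (k : K) : Option (Γ k) := (S k)[a]?

theorem stackTape_zero (S : ∀ k, List (Γ k)) (k : K) : stackTape S 0 k = (S k).head? :=
  List.head?_eq_getElem?.symm

theorem some_mem_stmts (M : Λ → TM2.Stmt Γ Λ σ) {L : Finset Λ} {l : Λ} (hl : l ∈ L) :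
    some (M l) ∈ TM2.stmts M L := by
  classical
  simp only [TM2.stmts, Finset.some_mem_insertNone, Finset.mem_biUnion]
  exact ⟨l, hl, TM2.stmts₁_self⟩

theorem supportsStmt_of_mem_stmts {M : Λ → TM2.Stmt Γ Λ σ} {L : Finset Λ}
    (hL : ∀ l ∈ L, TM2.SupportsStmt L (M l)) {s : TM2.Stmt Γ Λ σ} (hs : some s ∈ TM2.stmts M L) :
    TM2.SupportsStmt L s := by
  classical
  simp only [TM2.stmts, Finset.some_mem_insertNone, Finset.mem_biUnion] at hs
  obtain ⟨l, hl, hs⟩ := hs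
  exact TM2.stmts₁_supportsStmt_mono hs (hL l hl)

/-- The states of `Machine.ofTM2 M` with a statement that is part of the definition of a label in
`L`, or none. -/
def statesIn (M : Λ → TM2.Stmt Γ Λ σ) (L : Finset Λ) : Set (Option (TM2.Stmt Γ Λ σ) × σ) :=
  {q | q.1 ∈ TM2.stmts M L}

theorem finite_statesIn [Finite σ] (M : Λ → TM2.Stmt Γ Λ σ) (L : Finset Λ) :
    (statesIn M L).Finite :=
  ((Finset.finite_toSet (TM2.stmts M L)).prod Set.finite_univ).subset fun _ hq ↦ ⟨hq, trivial⟩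

variable [DecidableEq K]

/-- The local rule that pushes `x` on the stack `k`; the top of each stack is in the cell `0`. -/
def pushRule (k : K) (x : Γ k) (l : Option (∀ k, Option (Γ k))) (g _ : ∀ k, Option (Γ k)) :
    ∀ k, Option (Γ k) :=
  Function.update g k (l.elim (some x) (· k))

/-- The local rule that pops the stack `k`. -/
def popRule (k : K) (_ : Option (∀ k, Option (Γ k))) (g r : ∀ k, Option (Γ k)) :
    ∀ k, Option (Γ k) :=
  Function.update g k (r k)

/-- The machine that executes the multi-stack program `M`, one elementary statement at a time; its
state consists of the statement to be executed, `none` once `M` has halted, and the value of the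
internal variable. -/
def Machine.ofTM2 (M : Λ → TM2.Stmt Γ Λ σ) :
    Machine (Option (TM2.Stmt Γ Λ σ) × σ) (∀ k, Option (Γ k))
  | (none, _), _ => none
  | (some (.push k f s), v), _ => some ((some s, v), pushRule k (f v))
  | (some (.peek k f s), v), g => some ((some s, f v (g k)), fun _ g _ ↦ g)
  | (some (.pop k f s), v), g => some ((some s, f v (g k)), popRule k)
  | (some (.load a s), v), _ => some ((some s, a v), fun _ g _ ↦ g)
  | (some (.branch f s t), v), _ => some ((some (cond (f v) s t), v), fun _ g _ ↦ g)
  | (some (.goto l), v), _ => some ((some (M (l v)), v), fun _ g _ ↦ g)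
  | (some .halt, v), _ => some ((none, v), fun _ g _ ↦ g)

theorem updateTape_pushRule_stackTape (S : ∀ k, List (Γ k)) (k : K) (x : Γ k) :
    updateTape (pushRule k x) (stackTape S) = stackTape (Function.update S k (x :: S k)) := by
  funext a k'
  by_cases h : k' = k
  · subst h
    cases a <;> simp [updateTape, pushRule, stackTape, leftOf]
  · simp [updateTape, pushRule, stackTape, h]

theorem updateTape_popRule_stackTape (S : ∀ k, List (Γ k)) (k : K) :
    updateTape (popRule k) (stackTape S) = stackTape (Function.update S k (S k).tail) := by
  funext a k'
  by_cases h : k' = k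
  · subst h
    simp [updateTape, popRule, stackTape]
  · simp [updateTape, popRule, stackTape, h]

variable (M : Λ → TM2.Stmt Γ Λ σ)

/-- The configuration of `Machine.ofTM2 M` that represents a configuration of `M`. -/
def ofTM2Cfg (c : TM2.Cfg Γ Λ σ) : (Option (TM2.Stmt Γ Λ σ) × σ) × (ℕ → ∀ k, Option (Γ k)) :=
  ((c.l.map M, c.var), stackTape c.stk)

theorem reaches₁_step_ofTM2 (s : TM2.Stmt Γ Λ σ) (v : σ) (S : ∀ k, List (Γ k)) :
    Reaches₁ (Machine.ofTM2 M).step ((some s, v), stackTape S)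
      (ofTM2Cfg M (TM2.stepAux s v S)) := by
  induction s generalizing v S with
  | push k f s ih =>
    refine .head ?_ (ih v (Function.update S k (f v :: S k)))
    simp [Machine.step, Machine.ofTM2, updateTape_pushRule_stackTape]
  | peek k f s ih =>
    refine .head ?_ (ih (f v (S k).head?) S)
    rw [← stackTape_zero]; rfl
  | pop k f s ih =>
    refine .head ?_ (ih (f v (S k).head?) (Function.update S k (S k).tail))
    simp [Machine.step, Machine.ofTM2, updateTape_popRule_stackTape, stackTape_zero]
  | load a s ih => exact .head rfl (ih (a v) S)
  | branch f s t ihs iht =>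
    refine .head (b := ((some (cond (f v) s t), v), stackTape S)) rfl ?_
    rw [TM2.stepAux]
    cases f v
    exacts [iht v S, ihs v S]
  | goto l => exact .single rfl
  | halt => exact .single rfl

theorem dom_eval_step_ofTM2_iff (c : TM2.Cfg Γ Λ σ) :
    (eval (Machine.ofTM2 M).step (ofTM2Cfg M c)).Dom ↔ (eval (TM2.step M) c).Dom := by
  refine tr_eval_dom ((fun_respects (tr := ofTM2Cfg M)).2 ?_) rfl
  rintro ⟨_ | l, v, S⟩
  · rfl
  · exact reaches₁_step_ofTM2 M (M l) v S

theorem ofTM2_mem_statesIn {L : Finset Λ} (hL : ∀ l ∈ L, TM2.SupportsStmt L (M l)) :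
    ∀ q ∈ statesIn M L, ∀ g, ∀ p ∈ Machine.ofTM2 M q g, p.1 ∈ statesIn M L := by
  classical
  rintro ⟨_ | s, v⟩ hs g p hp
  · simp [Machine.ofTM2] at hp
  have mem_of_mem (t) (ht : t ∈ TM2.stmts₁ s) : some t ∈ TM2.stmts M L := TM2.stmts_trans ht hs
  have hsup := supportsStmt_of_mem_stmts hL hs
  cases s with
  | push k f s | peek k f s | pop k f s | load f s =>
    obtain rfl := Option.some_injective _ hp
    exact mem_of_mem s (by simp [TM2.stmts₁, TM2.stmts₁_self])
  | branch f s t =>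
    obtain rfl := Option.some_injective _ hp
    change some (cond (f v) s t) ∈ TM2.stmts M L
    cases f v <;> exact mem_of_mem _ (by simp [TM2.stmts₁, TM2.stmts₁_self])
  | goto l =>
    obtain rfl := Option.some_injective _ hp
    exact some_mem_stmts M (hsup v)
  | halt =>
    obtain rfl := Option.some_injective _ hp
    exact Finset.none_mem_insertNone

end ofTM2

section input

open PartrecToTM2

theorem getElem?_trPosNum (n : PosNum) (a : ℕ) : (trPosNum n)[a]? =
    if 2 ^ a ≤ (n : ℕ) then some (if (n : ℕ).testBit a then Γ'.bit1 else Γ'.bit0) else none := by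
  induction n generalizing a with
  | one =>
    cases a with
    | zero => simp [trPosNum]
    | succ a =>
      have : 0 < 2 ^ a := Nat.two_pow_pos a
      simp [trPosNum, Nat.pow_succ', show ¬ 2 * 2 ^ a ≤ 1 by omega]
  | bit0 n ih =>
    have := PosNum.cast_pos (α := ℕ) n
    cases a with
    | zero => simp [trPosNum, ← two_mul]; omega
    | succ a => simp [trPosNum, ih, ← two_mul, Nat.pow_succ', Nat.testBit_succ]
  | bit1 n ih =>
    cases a with
    | zero => simp [trPosNum, ← two_mul]
    | succ a =>
      have le_iff : 2 * 2 ^ a ≤ 2 * (n : ℕ) + 1 ↔ 2 ^ a ≤ (n : ℕ) := by omega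
      have half : (2 * (n : ℕ) + 1) / 2 = n := by omega
      simp only [trPosNum, List.getElem?_cons_succ, ih, PosNum.cast_bit1, ← two_mul,
        Nat.pow_succ', Nat.testBit_succ, le_iff, half]

theorem getElem?_trNat (n a : ℕ) : (trNat n)[a]? =
    if 2 ^ a ≤ n then some (if n.testBit a then Γ'.bit1 else Γ'.bit0) else none := by
  have cast_eq : ((n : Num) : ℕ) = n := Num.to_of_nat n
  rw [trNat]
  cases h : (n : Num) with
  | zero =>
    obtain rfl : n = 0 := by rw [← cast_eq, h]; rfl
    simp [trNum]
  | pos p => rw [trNum, getElem?_trPosNum, ← cast_eq, h, Num.cast_pos]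

theorem lt_length_trNat_iff (n a : ℕ) : a < (trNat n).length ↔ 2 ^ a ≤ n := by
  rw [← not_le, ← List.getElem?_eq_none_iff, getElem?_trNat]
  simp

theorem le_length_trNat_iff (n a : ℕ) : a ≤ (trNat n).length ↔ 2 ^ a ≤ 2 * n ∨ a = 0 := by
  cases a with
  | zero => simp
  | succ a => simp [lt_length_trNat_iff, pow_succ']

theorem getElem?_trList_singleton (n a : ℕ) : (trList [n])[a]? =
    if 2 ^ a ≤ n then some (if n.testBit a then Γ'.bit1 else Γ'.bit0)
    else if 2 ^ a ≤ 2 * n ∨ a = 0 then some Γ'.cons else none := by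
  rw [trList, trList, List.getElem?_append, getElem?_trNat]
  simp only [lt_length_trNat_iff]
  have hle := le_length_trNat_iff n a
  split_ifs
  · rfl
  · rfl
  · rw [show a - (trNat n).length = 0 by omega]
    rfl
  · rw [List.getElem?_eq_none]
    simp only [List.length_singleton]
    omega

instance : Finite K' :=
  Finite.of_injective (fun k : K' ↦ K'.rec (motive := fun _ ↦ Fin 4) 0 1 2 3 k)
    fun k k' h ↦ by cases k <;> cases k' <;> simp_all

theorem primrecFibers_getElem?_trList_singleton :
    PrimrecFibers fun p : ℕ × ℕ ↦ (trList [p.1])[p.2]? := by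
  have pow_two : Primrec fun p : ℕ × ℕ ↦ 2 ^ p.2 :=
    (Primrec₂.unpaired'.1 Nat.Primrec.pow).comp (.const 2) .snd
  have bit : PrimrecPred fun p : ℕ × ℕ ↦ p.1 / 2 ^ p.2 % 2 = 1 :=
    Primrec.eq.comp (Primrec.nat_mod.comp (Primrec.nat_div.comp .fst pow_two) (.const 2)) (.const 1)
  have lt_length : PrimrecPred fun p : ℕ × ℕ ↦ 2 ^ p.2 ≤ p.1 := Primrec.nat_le.comp pow_two .fst
  have le_length : PrimrecPred fun p : ℕ × ℕ ↦ 2 ^ p.2 ≤ 2 * p.1 ∨ p.2 = 0 :=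
    (Primrec.nat_le.comp pow_two (Primrec.nat_mul.comp (.const 2) .fst)).or
      (Primrec.eq.comp .snd (.const 0))
  classical
  convert ((primrecFibers_of_primrecPred lt_length).prodMk
    ((primrecFibers_of_primrecPred bit).prodMk (primrecFibers_of_primrecPred le_length))).postcomp
    fun x : Prop × Prop × Prop ↦ if x.1 then some (if x.2.1 then Γ'.bit1 else Γ'.bit0)
      else if x.2.2 then some Γ'.cons else none using 2 with p
  simp only [getElem?_trList_singleton, Nat.testBit_eq_decide_div_mod_eq, decide_eq_true_eq]
  congr

/-- The tape that holds the input `n` of a program. -/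
def inputTape (n : ℕ) : ℕ → K' → Option Γ' := stackTape (K'.elim (trList [n]) [] [] [])

theorem inputTape_apply (n a : ℕ) :
    inputTape n a = fun k ↦ if k = .main then (trList [n])[a]? else none := by
  funext k
  cases k <;> rfl

theorem primrecFibers_inputTape : PrimrecFibers fun p : ℕ × ℕ ↦ inputTape p.1 p.2 := by
  simp only [inputTape_apply]
  exact primrecFibers_getElem?_trList_singleton.postcomp fun o k ↦ if k = K'.main then o else none

theorem inputTape_eq_of_le (n : ℕ) {a : ℕ} (ha : n + 1 ≤ a) :
    inputTape n a = inputTape n (n + 1) := by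
  have empty (b) (hb : n + 1 ≤ b) : (trList [n])[b]? = none := by
    have : n < 2 ^ n := Nat.lt_two_pow_self
    have : 2 ^ (n + 1) ≤ 2 ^ b := Nat.pow_le_pow_right two_pos hb
    rw [getElem?_trList_singleton, if_neg (by omega), if_neg (by omega)]
  rw [inputTape_apply, inputTape_apply, empty a ha, empty _ le_rfl]

end input

open PartrecToTM2 in
theorem exists_machine_not_computablePred_halts : ∃ (Q G : Type) (_ : Finite Q) (_ : Finite G)
    (m : Machine Q G) (q : Q) (S : ℕ → ℕ → G), (∀ n a, n + 1 ≤ a → S n a = S n (n + 1)) ∧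
    (PrimrecFibers fun p : ℕ × ℕ ↦ S p.1 p.2) ∧
    ¬ ComputablePred fun n ↦ (eval m.step (q, S n)).Dom := by
  classical
  let halting (n : ℕ) : Part ℕ := (Denumerable.ofNat Nat.Partrec.Code n).eval 0
  have halting_partrec : Partrec halting :=
    Nat.Partrec.Code.eval_part.comp (Computable.ofNat _) (Computable.const 0)
  obtain ⟨c, hc⟩ := ToPartrec.Code.exists_code (Nat.Partrec'.part_iff₁.2 halting_partrec)
  have dom_eval_c (n : ℕ) : (c.eval [n]).Dom ↔ (halting n).Dom := by
    rw [show c.eval [n] = _ from hc ⟨[n], rfl⟩]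
    rfl
  have dom_eval_tr (n : ℕ) : (eval (TM2.step tr) (init c [n])).Dom ↔ (halting n).Dom := by
    rw [PartrecToTM2.tr_eval]
    exact dom_eval_c n
  have supports := tr_supports c Cont'.halt
  have mem_statesIn := ofTM2_mem_statesIn tr supports.2
  have := (finite_statesIn tr (codeSupp c Cont'.halt)).to_subtype
  let q : statesIn tr (codeSupp c Cont'.halt) :=
    ⟨(some (tr (trNormal c Cont'.halt)), none), some_mem_stmts tr supports.1⟩
  refine ⟨_, _, this, inferInstance, (Machine.ofTM2 tr).restrict _ mem_statesIn, q, inputTape,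
    fun n _ ↦ inputTape_eq_of_le n, primrecFibers_inputTape, fun h ↦ ?_⟩
  have halts_iff (n : ℕ) : _ ↔ (halting n).Dom :=
    (Machine.dom_eval_restrict_iff _ _ mem_statesIn q (inputTape n)).trans <|
      (dom_eval_step_ofTM2_iff tr (init c [n])).trans (dom_eval_tr n)
  refine ComputablePred.halting_problem 0 ?_
  simp only [halts_iff] at h
  obtain ⟨_, h⟩ := h
  exact ⟨fun _ ↦ Classical.dec _,
    (h.comp (Computable.encode (α := Nat.Partrec.Code))).of_eq fun d ↦ by simp [halting]⟩

/-! ### The domino problem -/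

/-- The tiles `0, …, card - 1`, together with the relations of fitting to the right and on top. -/
structure TileSet where
  card : ℕ
  hor : ℕ → ℕ → Prop
  ver : ℕ → ℕ → Prop

/-- The plane `c` of tiles, indexed by column and row, is a tiling. -/
structure TileSet.IsTiledBy (T : TileSet) (c : ℤ → ℤ → ℕ) : Prop where
  lt i j : c i j < T.card
  hor i j : T.hor (c i j) (c (i + 1) j)
  ver i j : T.ver (c i j) (c i (j + 1))

/-- The tile set `T n` depends on `n` in a primitive recursive way. -/
structure IsPrimrecFamily (T : ℕ → TileSet) : Prop where
  card : Primrec fun n ↦ (T n).card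
  hor : PrimrecPred fun p : ℕ × ℕ × ℕ ↦ (T p.1).hor p.2.1 p.2.2
  ver : PrimrecPred fun p : ℕ × ℕ × ℕ ↦ (T p.1).ver p.2.1 p.2.2

section Primrec

variable {α : Type*} [Primcodable α]

theorem primrecPred_imp {p q : α → Prop} (hp : PrimrecPred p) (hq : PrimrecPred q) :
    PrimrecPred fun x ↦ p x → q x :=
  (hp.not.or hq).of_eq fun _ ↦ imp_iff_not_or.symm

theorem primrecPred_iff {p q : α → Prop} (hp : PrimrecPred p) (hq : PrimrecPred q) :
    PrimrecPred fun x ↦ p x ↔ q x :=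
  ((primrecPred_imp hp hq).and (primrecPred_imp hq hp)).of_eq fun _ ↦ iff_def.symm

section Cell

variable {C : α → Type*} {S : ∀ x, TileSystem (C x)} {p q : ∀ x, Cell (C x)}

theorem primrecPred_isValid (hp : PrimrecFibers fun x ↦ (p x).skeleton)
    (col_eq_row : PrimrecPred fun x ↦ (p x).col = (p x).row)
    (left : PrimrecPred fun x ↦ (S x).left (p x).row)
    (bottom : PrimrecPred fun x ↦ (S x).bottom (p x).row)
    (ok : PrimrecPred fun x ↦ (S x).ok (p x).row) :
    PrimrecPred fun x ↦ (p x).IsValid (S x) :=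
  ((hp.pred IsCell).and <| (primrecPred_imp (hp.pred IsNode) col_eq_row).and <|
    (primrecPred_imp (hp.pred IsNode) (primrecPred_iff (hp.pred (·.2.IsBorder)) left)).and <|
    (primrecPred_imp (hp.pred IsNode) (primrecPred_iff (hp.pred (·.1.IsBorder)) bottom)).and <|
    primrecPred_imp (hp.pred IsNode) ok).of_eq fun _ ↦
      ⟨fun ⟨h, h', h'', h₃, h₄⟩ ↦ ⟨h, h', h'', h₃, h₄⟩,
        fun ⟨h, h', h'', h₃, h₄⟩ ↦ ⟨h, h', h'', h₃, h₄⟩⟩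

theorem primrecPred_isRight (hp : PrimrecFibers fun x ↦ (p x).skeleton)
    (hq : PrimrecFibers fun x ↦ (q x).skeleton)
    (hor : PrimrecPred fun x ↦ (S x).hor (p x).row (q x).row)
    (row_eq : PrimrecPred fun x ↦ (q x).row = (p x).row) :
    PrimrecPred fun x ↦ (p x).IsRight (S x) (q x) :=
  (((hp.prodMk hq).pred fun s ↦ StepRight s.1 s.2).and <|
    ((hp.prodMk hq).pred fun s ↦ SignalsRight s.1 s.2).and <|
    (primrecPred_imp (hq.pred IsNode) ((hq.pred (·.2.IsBorder)).or hor)).and <|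
    primrecPred_imp (hq.pred (¬ IsNode ·)) row_eq).of_eq fun _ ↦
      ⟨fun ⟨h, h', h'', h₃⟩ ↦ ⟨h, h', h'', h₃⟩, fun ⟨h, h', h'', h₃⟩ ↦ ⟨h, h', h'', h₃⟩⟩

end Cell

section tileSystem

variable {Q G : Type*} [Finite Q] [Finite G] {m : Machine Q G} {q : Q} {L : α → ℕ} {S : α → ℕ → G}
  {c d : ∀ x, Record Q G × Fin (L x + 1)}

theorem primrecPred_tileSystem_ok (hc : PrimrecFibers fun x ↦ (c x).1)
    (hc' : Primrec fun x ↦ ((c x).2 : ℕ)) (hS : PrimrecFibers fun x ↦ S x (c x).2) :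
    PrimrecPred fun x ↦ (m.tileSystem q (L x) (S x)).ok (c x) :=
  (hc.pred fun s ↦ s.left = none → s.head = s.content).and <|
    primrecPred_imp (hc.pred (·.initial = true)) <| (hc.pred (·.state = q)).and <|
    ((hc.prodMk hS).pred fun s ↦ s.1.content = s.2).and <|
    primrecPred_imp (hc.pred (·.left = none)) (Primrec.eq.comp hc' (.const 0))

theorem primrecPred_tileSystem_hor (hc : PrimrecFibers fun x ↦ (c x).1)
    (hd : PrimrecFibers fun x ↦ (d x).1) (hL : Primrec L) (hc' : Primrec fun x ↦ ((c x).2 : ℕ))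
    (hd' : Primrec fun x ↦ ((d x).2 : ℕ)) :
    PrimrecPred fun x ↦ (m.tileSystem q (L x) (S x)).hor (c x) (d x) :=
  (((hc.prodMk hd).pred fun s ↦ s.2.state = s.1.state ∧ s.2.head = s.1.head ∧
    s.1.right = s.2.content ∧ s.2.left = some s.1.content).and <|
    primrecPred_imp (hd.pred (·.initial = true)) <|
      Primrec.eq.comp hd' (Primrec.nat_min.comp (Primrec.succ.comp hc') hL)).of_eq fun _ ↦ by
    simp only [and_assoc]; rfl

theorem primrecPred_prod_fin_eq {A : Type*} {c d : ∀ x, A × Fin (L x + 1)} [Finite A]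
    (hc : PrimrecFibers fun x ↦ (c x).1) (hd : PrimrecFibers fun x ↦ (d x).1)
    (hc' : Primrec fun x ↦ ((c x).2 : ℕ)) (hd' : Primrec fun x ↦ ((d x).2 : ℕ)) :
    PrimrecPred fun x ↦ c x = d x :=
  (((hc.prodMk hd).pred fun s ↦ s.1 = s.2).and (Primrec.eq.comp hc' hd')).of_eq fun _ ↦ by
    rw [Prod.ext_iff, Fin.ext_iff]

end tileSystem

theorem exists_primrecFibers_surjective (A : Type*) [Finite A] [Nonempty A] :
    ∃ (e : ℕ → A) (K : ℕ), PrimrecFibers e ∧ ∀ y, ∃ i < K, e i = y := by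
  obtain ⟨K, ⟨φ⟩⟩ := Finite.exists_equiv_fin A
  have : NeZero K := ⟨fun h ↦ (h ▸ φ (Classical.arbitrary A)).elim0⟩
  refine ⟨fun i ↦ φ.symm (Fin.ofNat K i), K, fun y ↦ ?_, fun y ↦ ⟨φ y, (φ y).2, ?_⟩⟩
  · refine (Primrec.eq.comp (Primrec.nat_mod.comp .id (.const K))
      (.const (φ y : ℕ))).of_eq fun i ↦ ?_
    rw [Equiv.symm_apply_eq, Fin.ext_iff]
    rfl
  · simp

end Primrec

section cellTileSet

variable {A : Type*}

/-- The cell with number `a`, where `e` enumerates its finite data and `L` bounds its counters. -/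
def numberedCell (e : ℕ → SkeletonCell × A × A) (L a : ℕ) : Cell (A × Fin (L + 1)) where
  skeleton := (e a.unpair.1).1
  row := ((e a.unpair.1).2.1, Fin.ofNat (L + 1) a.unpair.2.unpair.1)
  col := ((e a.unpair.1).2.2, Fin.ofNat (L + 1) a.unpair.2.unpair.2)

/-- The cells of the tile system `S` as numbered tiles. -/
def cellTileSet (e : ℕ → SkeletonCell × A × A) (K L : ℕ) (S : TileSystem (A × Fin (L + 1))) :
    TileSet where
  card := Nat.pair K (Nat.pair (L + 1) (L + 1))
  hor a b := (numberedCell e L a).IsValid S ∧ (numberedCell e L a).IsRight S (numberedCell e L b)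
  ver a b := (numberedCell e L a).swap.IsRight S.transpose (numberedCell e L b).swap

variable {e : ℕ → SkeletonCell × A × A} {K L : ℕ} {S : TileSystem (A × Fin (L + 1))}

theorem exists_numberedCell_eq (he : ∀ y, ∃ i < K, e i = y) (p : Cell (A × Fin (L + 1))) :
    ∃ a < Nat.pair K (Nat.pair (L + 1) (L + 1)), numberedCell e L a = p := by
  obtain ⟨i, hi, h⟩ := he (p.skeleton, p.row.1, p.col.1)
  refine ⟨Nat.pair i (Nat.pair p.row.2 p.col.2), (Nat.pair_lt_pair_left _ hi).trans_le ?_, ?_⟩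
  · exact (Nat.pair_lt_pair_right _ ((Nat.pair_lt_pair_left _ p.row.2.2).trans
      (Nat.pair_lt_pair_right _ p.col.2.2))).le
  · simp [numberedCell, h]

theorem exists_isTiledBy_cellTileSet_iff (he : ∀ y, ∃ i < K, e i = y) :
    (∃ c, (cellTileSet e K L S).IsTiledBy c) ↔
      ∃ c : ℤ → ℤ → Cell (A × Fin (L + 1)), IsTiling S c := by
  constructor
  · rintro ⟨c, hc⟩
    exact ⟨fun i j ↦ numberedCell e L (c i j),
      fun i j ↦ ⟨(hc.hor i j).1, (hc.hor i j).2, hc.ver i j⟩⟩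
  · rintro ⟨c, hc⟩
    choose number number_lt number_eq using exists_numberedCell_eq (L := L) he
    refine ⟨fun i j ↦ number (c i j), ⟨fun i j ↦ number_lt _, fun i j ↦ ?_, fun i j ↦ ?_⟩⟩
    · simp only [cellTileSet, number_eq]
      exact ⟨(hc i j).valid, (hc i j).right⟩
    · simp only [cellTileSet, number_eq]
      exact (hc i j).above

theorem isPrimrecFamily_cellTileSet_tileSystem {Q G : Type*} [Finite Q] [Finite G]
    {e : ℕ → SkeletonCell × Record Q G × Record Q G} (he : PrimrecFibers e) (K : ℕ) {L : ℕ → ℕ}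
    (hL : Primrec L) (m : Machine Q G) (q : Q) {S : ℕ → ℕ → G}
    (hS : PrimrecFibers fun p : ℕ × ℕ ↦ S p.1 p.2) :
    IsPrimrecFamily fun n ↦ cellTileSet e K (L n) (m.tileSystem q (L n) (S n)) := by
  have hL₁ {x : ℕ × ℕ × ℕ → ℕ} (hx : Primrec x) :
      Primrec fun p : ℕ × ℕ × ℕ ↦ x p % (L p.1 + 1) :=
    Primrec.nat_mod.comp hx (Primrec.succ.comp (hL.comp .fst))
  have data {x : ℕ × ℕ × ℕ → ℕ} (hx : Primrec x) : PrimrecFibers fun p ↦ e (x p).unpair.1 :=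
    he.precomp (Primrec.fst.comp (Primrec.unpair.comp hx))
  have counters {x : ℕ × ℕ × ℕ → ℕ} (hx : Primrec x) :
      Primrec fun p ↦ (x p).unpair.2.unpair :=
    Primrec.unpair.comp (Primrec.snd.comp (Primrec.unpair.comp hx))
  have rowCounter {x : ℕ × ℕ × ℕ → ℕ} (hx : Primrec x) :
      Primrec fun p ↦ ((numberedCell e (L p.1) (x p)).row.2 : ℕ) :=
    hL₁ (Primrec.fst.comp (counters hx))
  have colCounter {x : ℕ × ℕ × ℕ → ℕ} (hx : Primrec x) :
      Primrec fun p ↦ ((numberedCell e (L p.1) (x p)).col.2 : ℕ) :=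
    hL₁ (Primrec.snd.comp (counters hx))
  have ha : Primrec fun p : ℕ × ℕ × ℕ ↦ p.2.1 := Primrec.fst.comp .snd
  have hb : Primrec fun p : ℕ × ℕ × ℕ ↦ p.2.2 := Primrec.snd.comp .snd
  have skeleton {x : ℕ × ℕ × ℕ → ℕ} (hx : Primrec x) := (data hx).postcomp (·.1)
  have row {x : ℕ × ℕ × ℕ → ℕ} (hx : Primrec x) := (data hx).postcomp (·.2.1)
  have col {x : ℕ × ℕ × ℕ → ℕ} (hx : Primrec x) := (data hx).postcomp (·.2.2)
  refine ⟨?_, PrimrecPred.and ?_ ?_, ?_⟩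
  · have := Primrec.succ.comp hL
    exact Primrec₂.natPair.comp (.const K) (Primrec₂.natPair.comp this this)
  · exact primrecPred_isValid (skeleton ha)
      (primrecPred_prod_fin_eq (col ha) (row ha) (colCounter ha) (rowCounter ha))
      ((row ha).pred (·.left = none)) ((row ha).pred (·.initial = true))
      (primrecPred_tileSystem_ok (row ha) (rowCounter ha)
        (hS.precomp (Primrec.fst.pair (rowCounter ha))))
  · exact primrecPred_isRight (skeleton ha) (skeleton hb)
      (primrecPred_tileSystem_hor (row ha) (row hb) (hL.comp .fst) (rowCounter ha) (rowCounter hb))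
      (primrecPred_prod_fin_eq (row hb) (row ha) (rowCounter hb) (rowCounter ha))
  · exact primrecPred_isRight ((skeleton ha).postcomp Prod.swap) ((skeleton hb).postcomp Prod.swap)
      (((col ha).prodMk (col hb)).pred fun s ↦ ∃ p ∈ m s.1.state s.1.head, s.2.state = p.1 ∧
        s.2.content = p.2 s.1.left s.1.content s.1.right)
      (primrecPred_prod_fin_eq (col hb) (col ha) (colCounter hb) (colCounter ha))

end cellTileSet

theorem exists_primrecFamily_not_computablePred_isTiledBy : ∃ T, IsPrimrecFamily T ∧
    ¬ ComputablePred fun n ↦ ∃ c, (T n).IsTiledBy c := by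
  obtain ⟨Q, G, _, _, m, q, S, hconst, hS, undecidable⟩ :=
    exists_machine_not_computablePred_halts
  have : Nonempty (SkeletonCell × Record Q G × Record Q G) :=
    have H : Half := ⟨0, false, false, false, false, false, false⟩
    have s : Record Q G := ⟨q, S 0 0, none, S 0 0, S 0 0, false⟩
    ⟨(H, H), s, s⟩
  obtain ⟨e, K, he, surj⟩ :=
    exists_primrecFibers_surjective (SkeletonCell × Record Q G × Record Q G)
  refine ⟨_, isPrimrecFamily_cellTileSet_tileSystem he K Primrec.succ m q hS, fun h ↦ ?_⟩
  have tiles_iff (n : ℕ) := (exists_isTiledBy_cellTileSet_iff surj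
    (S := m.tileSystem q (n + 1) (S n))).trans (exists_isTiling_tileSystem_iff (hconst n))
  simp only [Nat.succ_eq_add_one, tiles_iff] at h
  exact undecidable (h.not.of_eq fun _ ↦ not_not)

/-! ### Cellular automata and limit sets -/

section CellularAutomata

variable {A : Type*} {r : ℕ} {f : (Fin (2 * r + 1) → A) → A}

/-- The word `w` is an orphan of `F`: no image under `F` contains it. -/
def IsOrphan (F : Config A → Config A) (w : List A) : Prop :=
  ∀ x (p : ℤ), ∃ k : Fin w.length, F x (p + (k : ℕ)) ≠ w.get k

theorem caMap_translate (x : Config A) (p i : ℤ) :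
    caMap r f (fun j ↦ x (j + p)) i = caMap r f x (i + p) :=
  congrArg f (funext fun _ ↦ congrArg x (by ring))

theorem eventually_caMap_eq {x : ℕ → Config A} {z : Config A}
    (h : ∀ i, ∀ᶠ n in hyperfilter ℕ, x n i = z i) (i : ℤ) :
    ∀ᶠ n in hyperfilter ℕ, caMap r f (x n) i = caMap r f z i := by
  have window : ∀ᶠ n in hyperfilter ℕ, ∀ j : Fin (2 * r + 1),
      x n (i - r + (j : ℕ)) = z (i - r + (j : ℕ)) := eventually_all.2 fun j ↦ h _
  exact window.mono fun n hn ↦ congrArg f (funext hn)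

variable [Finite A]

theorem exists_isOrphan (hF : ¬ Function.Surjective (caMap r f)) :
    ∃ w, IsOrphan (caMap r f) w := by
  contrapose! hF
  intro y
  have approx (n : ℕ) : ∃ x, ∀ i : ℤ, i.natAbs ≤ n → caMap r f x i = y i := by
    have := hF (List.ofFn fun k : Fin (2 * n + 1) ↦ y ((k : ℕ) - n))
    simp only [IsOrphan, not_forall, not_exists, not_not] at this
    obtain ⟨x, p, h⟩ := this
    refine ⟨fun j ↦ x (j + (p + n)), fun i hi ↦ ?_⟩
    have hk := h ⟨(i + n).toNat, by rw [List.length_ofFn]; lia⟩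
    simp only [List.get_ofFn, Fin.val_cast] at hk
    rw [caMap_translate]
    convert hk using 2 <;> lia
  choose x hx using approx
  obtain ⟨z, hz⟩ := exists_eventually_eq x
  refine ⟨z, funext fun i ↦ ?_⟩
  obtain ⟨n, h, hn⟩ := ((eventually_caMap_eq hz i).and (eventually_hyperfilter_ge i.natAbs)).exists
  rw [← h, hx n i hn]

theorem mem_limitSet_caMap_iff {y : Config A} :
    y ∈ limitSet (caMap r f) ↔
      ∃ x : ℤ → Config A, x 0 = y ∧ ∀ n, x (n + 1) = caMap r f (x n) := by
  constructor
  · intro hy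
    choose w hw using Set.mem_iInter.1 hy
    obtain ⟨x, hx⟩ := exists_eventually_eq fun (n : ℕ) (p : ℤ × ℤ) ↦
      (caMap r f)^[(n + p.1).toNat] (w n) p.2
    refine ⟨fun n j ↦ x (n, j), funext fun j ↦ ?_, fun n ↦ funext fun j ↦ ?_⟩
    · obtain ⟨n, h⟩ := (hx (0, j)).exists
      simp only [← h, add_zero, Int.toNat_natCast, hw]
    · obtain ⟨k, hk, hnext, h⟩ := ((eventually_hyperfilter_ge n.natAbs).and ((hx (n + 1, j)).and
        (eventually_caMap_eq (fun j ↦ hx (n, j)) j))).exists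
      change x (n + 1, j) = caMap r f (fun j ↦ x (n, j)) j
      have hsucc : ((k : ℤ) + (n + 1)).toNat = (k + n).toNat + 1 := by lia
      rw [← h, ← hnext, hsucc, Function.iterate_succ_apply']
  · rintro ⟨x, rfl, hx⟩
    refine Set.mem_iInter.2 fun j ↦ ⟨x (-j), ?_⟩
    have orbit (k : ℕ) : (caMap r f)^[k] (x (-j)) = x (-j + k) := by
      induction k with
      | zero => simp
      | succ k ih => rw [Function.iterate_succ_apply', ih, ← hx, Nat.cast_succ, add_assoc]
    rw [orbit, neg_add_cancel]

end CellularAutomata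

/-! ### Subshifts defined by a local rule -/

/-- The rule `R` on quadrants of symbols depends only on the square of side `m` at the corner. -/
def IsLocalRule (m : ℕ) (R : (ℕ → ℕ → Bool) → Prop) : Prop :=
  ∀ ⦃W W'⦄, (∀ i < m, ∀ j < m, W i j = W' i j) → R W → R W'

theorem IsLocalRule.congr {m : ℕ} {R : (ℕ → ℕ → Bool) → Prop} (hR : IsLocalRule m R)
    {W W' : ℕ → ℕ → Bool} (h : ∀ i < m, ∀ j < m, W i j = W' i j) : R W ↔ R W' :=
  ⟨hR h, hR fun i hi j hj ↦ (h i hi j hj).symm⟩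

/-- The pattern `p`, continued by `false` to a quadrant. -/
def extendPattern {m : ℕ} (p : Fin m → Fin m → Bool) (i j : ℕ) : Bool :=
  if h : i < m ∧ j < m then p ⟨i, h.1⟩ ⟨j, h.2⟩ else false

theorem extendPattern_of_lt {m : ℕ} (W : ℕ → ℕ → Bool) {i j : ℕ} (hi : i < m) (hj : j < m) :
    extendPattern (fun i j : Fin m ↦ W i j) i j = W i j :=
  dif_pos ⟨hi, hj⟩

open Classical in
/-- The code forbidding the squares of side `m` which violate the rule `R`. -/
noncomputable def codeOfRule (m : ℕ) (R : (ℕ → ℕ → Bool) → Prop) : SFTCode :=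
  ⟨m, Finset.univ.filter fun p ↦ ¬ R (extendPattern p)⟩

theorem mem_codeOfRule {m : ℕ} {R : (ℕ → ℕ → Bool) → Prop} {p : Fin m → Fin m → Bool} :
    p ∈ (codeOfRule m R).2 ↔ ¬ R (extendPattern p) := by
  classical exact Finset.mem_filter_univ p

theorem mem_proj_image_sftOfCode_codeOfRule {m : ℕ} {R : (ℕ → ℕ → Bool) → Prop}
    (hR : IsLocalRule m R) {y : Config Bool} :
    y ∈ proj '' sftOfCode (codeOfRule m R) ↔
      ∃ x : ℤ → Config Bool, x 0 = y ∧ ∀ a b : ℤ, R fun i j ↦ x (a + i) (b + j) := by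
  have mem_iff (x : ℤ → Config Bool) : (fun p ↦ x p.1 p.2) ∈ sftOfCode (codeOfRule m R) ↔
      ∀ a b : ℤ, R fun i j ↦ x (a + i) (b + j) :=
    forall₂_congr fun a b ↦ (not_congr mem_codeOfRule).trans <| not_not.trans <|
      hR.congr fun _ hi _ hj ↦ extendPattern_of_lt (fun i j ↦ x (a + i) (b + j)) hi hj
  constructor
  · rintro ⟨x, hx, rfl⟩
    exact ⟨fun r c ↦ x (r, c), rfl, (mem_iff fun r c ↦ x (r, c)).1 hx⟩
  · rintro ⟨x, rfl, hx⟩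
    exact ⟨_, (mem_iff x).2 hx, rfl⟩

/-! ### Simulating a cellular automaton unless a tile set tiles the plane -/

section Blocks

variable (r : ℕ) (w : List Bool) (d : ℕ)

/-- The length of the run of `true` opening each block: long enough to locate the blocks. -/
def runLength : ℕ := r + w.length + d

/-- The length of the blocks representing one of `d` tiles. -/
def blockLength : ℕ := runLength r w d + 1 + w.length + d

/-- Bit `k` of the block representing the tile `a`: the block is a run of `true`, then `false`, the
word `w`, and `a` in unary notation. -/
def blockBit (a k : ℕ) : Bool :=
  if k < runLength r w d then true
  else (false :: w).getD (k - runLength r w d) (decide (k < runLength r w d + 1 + w.length + a))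

/-- The sequence `u` starts with the block representing the tile `a`. -/
def IsBlock (a : ℕ) (u : ℕ → Bool) : Prop :=
  ∀ k < blockLength r w d, u k = blockBit r w d a k

variable {r w d} {a b : ℕ} {u v : ℕ → Bool}

theorem blockBit_of_lt_runLength {k : ℕ} (hk : k < runLength r w d) : blockBit r w d a k = true :=
  if_pos hk

theorem blockBit_runLength : blockBit r w d a (runLength r w d) = false := by
  simp [blockBit]

theorem blockBit_word (k : Fin w.length) :
    blockBit r w d a (runLength r w d + 1 + k) = w.get k := by
  have hk : runLength r w d + 1 + k - runLength r w d = k + 1 := by lia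
  rw [blockBit, if_neg (by lia), hk, List.getD_cons_succ, List.getD_eq_getElem _ _ k.2,
    List.get_eq_getElem]

theorem blockBit_unary (t : ℕ) :
    blockBit r w d a (runLength r w d + 1 + w.length + t) = decide (t < a) := by
  rw [blockBit, if_neg (by lia), List.getD_eq_default _ _ (by rw [List.length_cons]; lia)]
  simp

theorem IsBlock.congr (h : ∀ k < blockLength r w d, u k = v k) :
    IsBlock r w d a u ↔ IsBlock r w d a v :=
  forall₂_congr fun k hk ↦ by rw [h k hk]

theorem IsBlock.eq (hu : IsBlock r w d a u) (hu' : IsBlock r w d b u) (ha : a < d) (hb : b < d) :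
    a = b := by
  have unary (t : ℕ) (ht : t < d) : t < a ↔ t < b := by
    have hlt : runLength r w d + 1 + w.length + t < blockLength r w d := by
      rw [blockLength]; lia
    have := (hu _ hlt).symm.trans (hu' _ hlt)
    rwa [blockBit_unary, blockBit_unary, decide_eq_decide] at this
  have := unary a ha
  have := unary b hb
  lia

theorem IsBlock.not_isBlock_add (hu : IsBlock r w d b u) (hb : b < d) {n : ℕ} (hn : 0 < n)
    (hlt : n < blockLength r w d) : ¬ IsBlock r w d a fun k ↦ u (n + k) := by
  intro hv
  -- A bit of the first block that is `false` falls into the opening run of the second one.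
  have clash {k : ℕ} (hk : k < blockLength r w d) (hnk : n ≤ k) (hrun : k - n < runLength r w d)
      (hbit : blockBit r w d b k = false) : False := by
    have : u (n + (k - n)) = true := (hv (k - n) (by lia)).trans (blockBit_of_lt_runLength hrun)
    rw [Nat.add_sub_cancel' hnk, hu k hk, hbit] at this
    exact Bool.false_ne_true this
  rcases le_or_gt n (runLength r w d) with h | h
  · exact clash (by rw [blockLength]; lia) h (by lia) blockBit_runLength
  · obtain ⟨e, rfl⟩ := Nat.exists_eq_add_of_lt hb
    refine clash (k := runLength r w (b + e + 1) + 1 + w.length + (b + e)) ?_ ?_ ?_ ?_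
    · rw [blockLength]; lia
    · rw [blockLength] at hlt; lia
    · rw [runLength] at *; lia
    · rw [blockBit_unary]; simp

/-- The values of `x` from position `p` on. -/
def ray (x : Config Bool) (p : ℤ) (k : ℕ) : Bool := x (p + k)

theorem ray_add (x : Config Bool) (p : ℤ) (n : ℕ) :
    (fun k ↦ ray x p (n + k)) = ray x (p + n) :=
  funext fun k ↦ congrArg x (by push_cast; ring)

theorem IsBlock.position_eq {x : Config Bool} {p q : ℤ} (hp : IsBlock r w d a (ray x p))
    (hq : IsBlock r w d b (ray x q)) (ha : a < d) (hb : b < d)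
    (hpq : p < q + blockLength r w d) (hqp : q < p + blockLength r w d) : p = q := by
  by_contra hne
  wlog hlt : q < p generalizing p q a b
  · exact this hq hp hb ha hqp hpq (Ne.symm hne) (by lia)
  obtain ⟨n, rfl⟩ := Int.le.dest hlt.le
  refine hq.not_isBlock_add (a := a) (n := n) hb (by lia) (by lia) ?_
  rwa [ray_add]

end Blocks

section Marks

variable (r : ℕ) (w : List Bool) (T : TileSet)

/-- The sequence `u` starts with the blocks of two tiles fitting horizontally. -/
def HorPair (u : ℕ → Bool) : Prop :=
  ∃ a < T.card, ∃ b < T.card, IsBlock r w T.card a u ∧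
    IsBlock r w T.card b (fun k ↦ u (blockLength r w T.card + k)) ∧ T.hor a b

/-- The sequences `u` and `v` start with the blocks of two tiles fitting vertically. -/
def VerPair (u v : ℕ → Bool) : Prop :=
  ∃ a < T.card, ∃ b < T.card, IsBlock r w T.card a u ∧ IsBlock r w T.card b v ∧ T.ver a b

/-- The segments `u` and `v` of two adjacent rows start with three pairs of fitting blocks, and the
last two blocks of `v` fit as well. This is the excuse for an error, between `v` and the next
row, above the middle blocks. -/
def IsMarked (u v : ℕ → Bool) : Prop :=
  (∀ k < 3, VerPair r w T (fun j ↦ u (k * blockLength r w T.card + j))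
    fun j ↦ v (k * blockLength r w T.card + j)) ∧
  HorPair r w T fun j ↦ v (blockLength r w T.card + j)

/-- Row `2` of the window `W` continues row `1` according to the local rule `f` at one cell, unless
there are marks in the rows `0` and `1` around this cell. -/
def SimulationRule (f : (Fin (2 * r + 1) → Bool) → Bool) (W : ℕ → ℕ → Bool) : Prop :=
  f (fun j ↦ W 1 (2 * blockLength r w T.card - r + j)) = W 2 (2 * blockLength r w T.card) ∨
    ∃ o < blockLength r w T.card + 1, IsMarked r w T (fun j ↦ W 0 (o + j)) fun j ↦ W 1 (o + j)

/-- The rows of `x` form an orbit of the cellular automaton except at marked places. -/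
def IsSimulation (f : (Fin (2 * r + 1) → Bool) → Bool) (x : ℤ → Config Bool) : Prop :=
  ∀ n c, caMap r f (x n) c = x (n + 1) c ∨ ∃ o : ℕ, o < blockLength r w T.card + 1 ∧
    IsMarked r w T (ray (x (n - 1)) (c - 2 * blockLength r w T.card + o))
      (ray (x n) (c - 2 * blockLength r w T.card + o))

variable {r w T} {f : (Fin (2 * r + 1) → Bool) → Bool} {u v u' v' : ℕ → Bool}

theorem HorPair.congr (h : ∀ k < 2 * blockLength r w T.card, u k = v k) :
    HorPair r w T u ↔ HorPair r w T v := by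
  have first (a : ℕ) : IsBlock r w T.card a u ↔ IsBlock r w T.card a v :=
    IsBlock.congr fun k hk ↦ h k (by lia)
  have second (a : ℕ) : IsBlock r w T.card a (fun k ↦ u (blockLength r w T.card + k)) ↔
      IsBlock r w T.card a fun k ↦ v (blockLength r w T.card + k) :=
    IsBlock.congr fun k hk ↦ h _ (by lia)
  simp only [HorPair, first, second]

theorem VerPair.congr (hu : ∀ k < blockLength r w T.card, u k = u' k)
    (hv : ∀ k < blockLength r w T.card, v k = v' k) : VerPair r w T u v ↔ VerPair r w T u' v' := by
  simp only [VerPair, IsBlock.congr hu, IsBlock.congr hv]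

theorem IsMarked.congr (hu : ∀ k < 3 * blockLength r w T.card, u k = u' k)
    (hv : ∀ k < 3 * blockLength r w T.card, v k = v' k) :
    IsMarked r w T u v ↔ IsMarked r w T u' v' := by
  refine and_congr (forall₂_congr fun k hk ↦ ?_) (HorPair.congr fun j hj ↦ hv _ (by lia))
  have hlt (j : ℕ) (hj : j < blockLength r w T.card) :
      k * blockLength r w T.card + j < 3 * blockLength r w T.card := by
    interval_cases k <;> lia
  exact VerPair.congr (fun j hj ↦ hu _ (hlt j hj)) fun j hj ↦ hv _ (hlt j hj)

theorem lt_blockLength : r < blockLength r w T.card := by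
  rw [blockLength, runLength]; lia

theorem isLocalRule_simulationRule :
    IsLocalRule (4 * blockLength r w T.card) (SimulationRule r w T f) := by
  intro W W' h
  have hr : r < blockLength r w T.card := lt_blockLength
  refine Or.imp (fun hf ↦ ?_) fun ⟨o, ho, hm⟩ ↦ ⟨o, ho, ?_⟩
  · rw [← h 2 (by lia) _ (by lia), ← hf]
    exact congrArg f (funext fun j ↦ (h 1 (by lia) _ (by lia)).symm)
  · exact (IsMarked.congr (fun k hk ↦ h 0 (by lia) _ (by lia))
      fun k hk ↦ h 1 (by lia) _ (by lia)).1 hm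

theorem simulationRule_window (x : ℤ → Config Bool) (n c : ℤ) :
    SimulationRule r w T f (fun i ↦ ray (x (n - 1 + i)) (c - 2 * blockLength r w T.card)) ↔
      caMap r f (x n) c = x (n + 1) c ∨ ∃ o : ℕ, o < blockLength r w T.card + 1 ∧
        IsMarked r w T (ray (x (n - 1)) (c - 2 * blockLength r w T.card + o))
          (ray (x n) (c - 2 * blockLength r w T.card + o)) := by
  have hr : r < blockLength r w T.card := lt_blockLength
  have hone : n - 1 + (1 : ℕ) = n := by lia
  have htwo : n - 1 + (2 : ℕ) = n + 1 := by lia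
  have cells : (fun j : Fin (2 * r + 1) ↦ ray (x n) (c - 2 * blockLength r w T.card)
      (2 * blockLength r w T.card - r + j)) = fun j : Fin (2 * r + 1) ↦ x n (c - r + (j : ℕ)) :=
    funext fun j ↦ congrArg (x n) (by lia)
  have cell : ray (x (n + 1)) (c - 2 * blockLength r w T.card) (2 * blockLength r w T.card) =
      x (n + 1) c := congrArg (x (n + 1)) (by lia)
  simp only [SimulationRule, hone, htwo, Nat.cast_zero, add_zero, ray_add, cells, cell, caMap]

theorem forall_simulationRule_iff {x : ℤ → Config Bool} :
    (∀ a b : ℤ, SimulationRule r w T f fun i j ↦ x (a + i) (b + j)) ↔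
      IsSimulation r w T f x := by
  refine ⟨fun h n c ↦ (simulationRule_window x n c).1 (h _ _), fun h a b ↦ ?_⟩
  have := (simulationRule_window x _ _).2 (h (a + 1) (b + 2 * blockLength r w T.card))
  rwa [add_sub_cancel_right, add_sub_cancel_right] at this

end Marks

section NoTiling

variable {r : ℕ} {f : (Fin (2 * r + 1) → Bool) → Bool} {w : List Bool} {T : TileSet}
  {x : ℤ → Config Bool}

theorem IsMarked.verPair {x y : Config Bool} {p : ℤ} (h : IsMarked r w T (ray x p) (ray y p))
    {k : ℕ} (hk : k < 3) : VerPair r w T (ray x (p + k * blockLength r w T.card))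
      (ray y (p + k * blockLength r w T.card)) := by
  simpa only [ray_add, Nat.cast_mul] using h.1 k hk

/-- The block in row `n + 1` contains the orphan `w`, hence an error, and its excuse can only be
aligned with the block in row `n`. -/
theorem IsSimulation.isMarked_of_verPair (hw : IsOrphan (caMap r f) w)
    (hx : IsSimulation r w T f x) {n q : ℤ} (h : VerPair r w T (ray (x n) q) (ray (x (n + 1)) q)) :
    IsMarked r w T (ray (x (n - 1)) (q - blockLength r w T.card))
      (ray (x n) (q - blockLength r w T.card)) := by
  obtain ⟨a, ha, b, -, hblock, hnext, -⟩ := h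
  have hlen : blockLength r w T.card = runLength r w T.card + 1 + w.length + T.card := rfl
  obtain ⟨k, hk⟩ := hw (x n) (q + (runLength r w T.card + 1 : ℕ))
  have hkw : (k : ℕ) < w.length := k.2
  have hword := hnext (runLength r w T.card + 1 + k) (by lia)
  rw [blockBit_word] at hword
  obtain hok | ⟨o, ho, hm⟩ := hx n (q + (runLength r w T.card + 1 : ℕ) + (k : ℕ))
  · exact absurd (hok.trans (by rw [← hword, ray]; congr 1; push_cast; ring)) hk
  · obtain ⟨-, -, b', hb', -, hblock', -⟩ := hm.verPair (k := 1) (by lia)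
    rw [Nat.cast_one, one_mul] at hblock'
    have hpos := hblock'.position_eq hblock hb' ha (by omega) (by omega)
    rwa [eq_sub_of_add_eq hpos] at hm

theorem IsSimulation.verPair_cone (hw : IsOrphan (caMap r f) w) (hx : IsSimulation r w T f x)
    {n q : ℤ} (h : VerPair r w T (ray (x n) q) (ray (x (n + 1)) q)) (s : ℕ) (k : ℤ)
    (hk : k.natAbs ≤ s) :
    VerPair r w T (ray (x (n - s)) (q + k * blockLength r w T.card))
      (ray (x (n - s + 1)) (q + k * blockLength r w T.card)) := by
  induction s generalizing k with
  | zero =>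
    obtain rfl : k = 0 := by lia
    simpa using h
  | succ s ih =>
    -- `i = 0, 1, 2` descends to the right, straight down and to the left.
    obtain ⟨i, hi, k', hk', rfl⟩ : ∃ i : ℕ, i < 3 ∧ ∃ k' : ℤ, k'.natAbs ≤ s ∧ k = k' - 1 + i := by
      rcases lt_trichotomy k 0 with hneg | rfl | hpos
      · exact ⟨0, by lia, k + 1, by lia, by lia⟩
      · exact ⟨1, by lia, 0, by lia, by lia⟩
      · exact ⟨2, by lia, k - 1, by lia, by lia⟩
    have := (hx.isMarked_of_verPair hw (ih k' hk')).verPair hi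
    have hrow : n - ((s + 1 : ℕ) : ℤ) = n - s - 1 := by lia
    have hcol : q + (k' - 1 + i) * blockLength r w T.card =
        q + k' * blockLength r w T.card - blockLength r w T.card + i * blockLength r w T.card := by
      ring
    rwa [hrow, hcol, sub_add_cancel]

theorem IsSimulation.exists_isTiledBy (hw : IsOrphan (caMap r f) w) (hx : IsSimulation r w T f x)
    {n q : ℤ} (h : VerPair r w T (ray (x n) q) (ray (x (n + 1)) q)) : ∃ c, T.IsTiledBy c := by
  obtain ⟨a₀, ha₀, -⟩ := id h
  have : Nonempty (Fin T.card) := ⟨⟨a₀, ha₀⟩⟩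
  let tile (u : ℕ → Bool) : Fin T.card := Classical.epsilon fun a ↦ IsBlock r w T.card a u
  have tile_eq {u a} (ha : a < T.card) (hu : IsBlock r w T.card a u) : (tile u : ℕ) = a :=
    (Classical.epsilon_spec (p := fun a : Fin T.card ↦ IsBlock r w T.card a u)
      ⟨⟨a, ha⟩, hu⟩).eq hu (tile u).2 ha
  let place (m : ℕ) (i j : ℤ) : ℕ → Bool :=
    ray (x (n - 2 * m + j)) (q + i * blockLength r w T.card)
  obtain ⟨c, -, hc⟩ := exists_limit (P := fun _ _ (a b c : Fin T.card) ↦ T.hor a b ∧ T.ver a c)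
    (fun m i j ↦ tile (place m i j)) fun i j ↦ by
      refine (eventually_hyperfilter_ge (i.natAbs + j.natAbs)).mono fun m hm ↦ ?_
      have hs : n - ((2 * m - j).toNat : ℤ) = n - 2 * m + j := by lia
      have hver := hx.verPair_cone hw h (2 * m - j).toNat i (by lia)
      have hhor := (hx.isMarked_of_verPair hw hver).2
      rw [ray_add, hs, sub_add_cancel] at hhor
      rw [hs, add_assoc _ j] at hver
      obtain ⟨a, ha, b, hb, hblock, hright, hab⟩ := hhor
      obtain ⟨a', ha', b', hb', hblock', habove, hab'⟩ := hver
      have hplace : place m (i + 1) j = fun k ↦ place m i j (blockLength r w T.card + k) := by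
        rw [ray_add, add_assoc, ← add_one_mul]
      rw [← hblock.eq hblock' ha ha'] at hab'
      rw [hplace, tile_eq ha hblock, tile_eq hb hright, tile_eq hb' habove]
      exact ⟨hab, hab'⟩
  exact ⟨fun i j ↦ c i j, fun i j ↦ (c i j).2, fun i j ↦ (hc i j).1, fun i j ↦ (hc i j).2⟩

theorem IsSimulation.orbit (hw : IsOrphan (caMap r f) w) (hx : IsSimulation r w T f x)
    (hT : ¬ ∃ c, T.IsTiledBy c) (n : ℤ) : x (n + 1) = caMap r f (x n) := by
  funext c
  obtain h | ⟨o, -, hm⟩ := hx n c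
  · exact h.symm
  · have := hm.verPair (k := 0) (by lia)
    exact absurd (hx.exists_isTiledBy hw (n := n - 1) (by rwa [sub_add_cancel])) hT

theorem isSimulation_of_orbit (hx : ∀ n, x (n + 1) = caMap r f (x n)) : IsSimulation r w T f x :=
  fun n _ ↦ Or.inl (by rw [hx n])

end NoTiling

section Tiling

variable {r : ℕ} {f : (Fin (2 * r + 1) → Bool) → Bool} {w : List Bool} {T : TileSet}
  {c : ℤ → ℤ → ℕ}

/-- The row made of the blocks of the tiles `a i`. -/
def tileRow (r : ℕ) (w : List Bool) (d : ℕ) (a : ℤ → ℕ) : Config Bool :=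
  fun p ↦ blockBit r w d (a (p / blockLength r w d)) (p % blockLength r w d).toNat

theorem isBlock_tileRow (r : ℕ) (w : List Bool) (d : ℕ) (a : ℤ → ℕ) (i : ℤ) :
    IsBlock r w d (a i) (ray (tileRow r w d a) (i * blockLength r w d)) := by
  intro k hk
  have hk' : (k : ℤ) < blockLength r w d := by lia
  have hdiv : (i * blockLength r w d + k) / blockLength r w d = i := by
    rw [add_comm, Int.add_mul_ediv_right _ _ (by lia), Int.ediv_eq_zero_of_lt (by lia) hk',
      zero_add]
  have hmod : (i * blockLength r w d + k) % blockLength r w d = k := by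
    rw [add_comm, Int.add_mul_emod_self_right, Int.emod_eq_of_lt (by lia) hk']
  rw [ray, tileRow, hdiv, hmod, Int.toNat_natCast]

theorem isMarked_tileRow (hc : T.IsTiledBy c) (i n : ℤ) :
    IsMarked r w T (ray (tileRow r w T.card fun i ↦ c i (n - 1)) (i * blockLength r w T.card))
      (ray (tileRow r w T.card fun i ↦ c i n) (i * blockLength r w T.card)) := by
  refine ⟨fun k _ ↦ ?_, ?_⟩
  · have hver := hc.ver (i + k) (n - 1)
    rw [sub_add_cancel] at hver
    rw [ray_add, ray_add, Nat.cast_mul, ← add_mul]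
    exact ⟨_, hc.lt _ _, _, hc.lt _ _, isBlock_tileRow _ _ _ _ _, isBlock_tileRow _ _ _ _ _, hver⟩
  · rw [ray_add, ← add_one_mul]
    refine ⟨_, hc.lt _ _, _, hc.lt _ _, isBlock_tileRow _ _ _ _ _, ?_, hc.hor (i + 1) n⟩
    rw [ray_add, ← add_one_mul]
    exact isBlock_tileRow _ _ _ _ _

/-- Below row `0` all cells are marked, so that row `0` can be chosen freely. -/
theorem exists_isSimulation_of_isTiledBy (hc : T.IsTiledBy c) (y : Config Bool) :
    ∃ x, x 0 = y ∧ IsSimulation r w T f x := by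
  let x (n : ℤ) : Config Bool :=
    if n < 0 then tileRow r w T.card (c · n) else (caMap r f)^[n.toNat] y
  refine ⟨x, rfl, fun n p ↦ ?_⟩
  rcases lt_or_ge n 0 with hn | hn
  · have hpos : (0 : ℤ) < blockLength r w T.card := by
      have := lt_blockLength (r := r) (w := w) (T := T)
      lia
    have hmod := Int.emod_lt_of_pos p hpos
    have hmod' := Int.emod_nonneg p hpos.ne'
    refine .inr ⟨(blockLength r w T.card - p % blockLength r w T.card).toNat, by lia, ?_⟩
    have hstart : p - 2 * blockLength r w T.card +
        ((blockLength r w T.card - p % blockLength r w T.card).toNat : ℤ) =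
          (p / blockLength r w T.card - 1) * blockLength r w T.card := by
      rw [Int.toNat_of_nonneg (by lia)]
      linarith [Int.emod_add_mul_ediv p (blockLength r w T.card)]
    have hn' : n - 1 < 0 := by lia
    simp only [x, if_pos hn, if_pos hn', hstart]
    exact isMarked_tileRow hc _ n
  · have hsucc : (n + 1).toNat = n.toNat + 1 := by lia
    refine .inl ?_
    simp only [x, if_neg hn.not_gt, if_neg (show ¬ n + 1 < 0 by lia), hsucc,
      Function.iterate_succ_apply']

end Tiling

section Code

variable (r : ℕ) (f : (Fin (2 * r + 1) → Bool) → Bool) (w : List Bool) (T : TileSet)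

/-- The code of the subshift of simulations. -/
noncomputable def simulationCode : SFTCode :=
  codeOfRule (4 * blockLength r w T.card) (SimulationRule r w T f)

variable {r f w T}

theorem mem_proj_image_simulationCode {y : Config Bool} :
    y ∈ proj '' sftOfCode (simulationCode r f w T) ↔ ∃ x, x 0 = y ∧ IsSimulation r w T f x := by
  simp only [simulationCode, mem_proj_image_sftOfCode_codeOfRule isLocalRule_simulationRule,
    forall_simulationRule_iff]

theorem proj_image_simulationCode_of_not_tiled (hw : IsOrphan (caMap r f) w)
    (hT : ¬ ∃ c, T.IsTiledBy c) :
    proj '' sftOfCode (simulationCode r f w T) = limitSet (caMap r f) := by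
  ext y
  rw [mem_proj_image_simulationCode, mem_limitSet_caMap_iff]
  exact exists_congr fun x ↦ and_congr_right fun _ ↦
    ⟨fun hx ↦ hx.orbit hw hT, isSimulation_of_orbit⟩

theorem proj_image_simulationCode_of_tiled (hT : ∃ c, T.IsTiledBy c) :
    proj '' sftOfCode (simulationCode r f w T) = Set.univ := by
  obtain ⟨c, hc⟩ := hT
  exact Set.eq_univ_of_forall fun y ↦
    mem_proj_image_simulationCode.2 (exists_isSimulation_of_isTiledBy hc y)

end Code

/-! ### Numerical codes of finite sets of patterns -/

open Encodable

section Encode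

variable {α : Type*} [Encodable α]

theorem encode_map_encode (l : List α) : encode (l.map encode) = encode l := by
  induction l with
  | nil => rfl
  | cons a l ih => rw [List.map_cons, encode_list_cons, encode_list_cons, ih, encode_nat]

theorem exists_encode_multiset_eq (s : Multiset α) :
    ∃ l : List α, l = s ∧ (l.map encode).Pairwise (· ≤ ·) ∧ encode s = encode l := by
  let _ : IsLinearOrder α (encode ⁻¹'o ((· ≤ ·) : ℕ → ℕ → Prop)) :=
    (RelEmbedding.preimage ⟨encode, encode_injective⟩ (· ≤ ·)).isLinearOrder
  let _ : DecidableRel (encode ⁻¹'o ((· ≤ ·) : ℕ → ℕ → Prop) : α → α → Prop) :=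
    fun a b ↦ inferInstanceAs (Decidable (encode a ≤ encode b))
  exact ⟨s.sort (encode ⁻¹'o (· ≤ ·)), s.sort_eq _,
    List.pairwise_map.2 (s.pairwise_sort (encode ⁻¹'o (· ≤ ·))), rfl⟩

theorem encode_finset_eq (s : Finset α) {codes : List ℕ} (sorted : codes.Pairwise (· < ·))
    (mem_codes : ∀ k, k ∈ codes ↔ ∃ a ∈ s, encode a = k) : encode s = encode codes := by
  obtain ⟨l, hl, l_sorted, hs⟩ := exists_encode_multiset_eq s.val
  have mem_l (a : α) : a ∈ l ↔ a ∈ s := by rw [← Finset.mem_val, ← hl, Multiset.mem_coe]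
  have nodup : (l.map encode).Nodup :=
    (Multiset.coe_nodup.1 (hl ▸ s.nodup)).map encode_injective
  have perm : (l.map encode).Perm codes :=
    (List.perm_ext_iff_of_nodup nodup (sorted.imp ne_of_lt)).2 fun k ↦ by
      simp only [mem_codes, List.mem_map, mem_l]
  have eq : l.map encode = codes :=
    perm.eq_of_pairwise (fun _ _ _ _ ↦ le_antisymm) l_sorted (sorted.imp le_of_lt)
  rw [← eq, encode_map_encode]
  exact hs

/-- The code of a function on `Fin m` whose values have the codes `g i`. -/
def tableCode (m : ℕ) (g : ℕ → ℕ) : ℕ :=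
  encode ((List.range m).map fun i ↦ Nat.pair i (g i))

/-- The code of the value at `i` of the function with code `k`, and a junk value beyond its
domain. -/
def tableValue (k i : ℕ) : ℕ :=
  ((Denumerable.ofNat (List ℕ) k).getD i 0).unpair.2

theorem encode_eq_tableCode {m : ℕ} (p : Fin m → α) {g : ℕ → ℕ} (hg : ∀ i, encode (p i) = g i) :
    @encode _ (Encodable.finPi m fun _ ↦ α) p = tableCode m g := by
  have graph : @encode _ (Encodable.finPi m fun _ ↦ α) p =
      encode (List.ofFn fun i : Fin m ↦ (⟨i, p i⟩ : Σ _ : Fin m, α)) :=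
    congrArg encode (List.Vector.toList_ofFn fun i : Fin m ↦ (⟨i, p i⟩ : Σ _ : Fin m, α))
  rw [graph, ← encode_map_encode, tableCode]
  congr 1
  refine List.ext_getElem (by simp) fun i _ _ ↦ ?_
  simp only [List.getElem_map, List.getElem_ofFn, List.getElem_range, encode_sigma_val, hg]
  rfl

end Encode

theorem tableCode_congr {m : ℕ} {g g' : ℕ → ℕ} (h : ∀ i < m, g i = g' i) :
    tableCode m g = tableCode m g' :=
  congrArg encode (List.map_congr_left fun i hi ↦ by rw [h i (List.mem_range.1 hi)])

theorem tableValue_tableCode {m i : ℕ} (g : ℕ → ℕ) (hi : i < m) :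
    tableValue (tableCode m g) i = g i := by
  rw [tableValue, tableCode, Denumerable.ofNat_encode,
    List.getD_eq_getElem _ _ (by simpa using hi), List.getElem_map, List.getElem_range,
    Nat.unpair_pair]

theorem natPair_mono {a b c d : ℕ} (hab : a ≤ b) (hcd : c ≤ d) : Nat.pair a c ≤ Nat.pair b d :=
  calc
    Nat.pair a c ≤ Nat.pair b c :=
      StrictMono.monotone (fun _ _ h ↦ Nat.pair_lt_pair_left c h) hab
    _ ≤ Nat.pair b d := StrictMono.monotone (fun _ _ h ↦ Nat.pair_lt_pair_right b h) hcd

theorem tableCode_mono (m : ℕ) : Monotone (tableCode m) := by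
  intro g g' h
  unfold tableCode
  induction List.range m with
  | nil => exact le_rfl
  | cons i l ih =>
    rw [List.map_cons, List.map_cons, encode_list_cons, encode_list_cons]
    exact Nat.succ_le_succ (natPair_mono (natPair_mono le_rfl (h i)) ih)

/-- The code of the pattern of side `m` at the corner of `W`. -/
def patternCode (m : ℕ) (W : ℕ → ℕ → Bool) : ℕ :=
  tableCode m fun i ↦ tableCode m fun j ↦ encode (W i j)

/-- The pattern with code `k`, continued by junk values to a quadrant. -/
def codedPattern (k i j : ℕ) : Bool :=
  decide (tableValue (tableValue k i) j = 1)

theorem encode_pattern {m : ℕ} (p : Fin m → Fin m → Bool) :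
    encode p = patternCode m (extendPattern p) :=
  encode_eq_tableCode p fun i ↦ encode_eq_tableCode (p i) fun j ↦ by simp [extendPattern]

theorem patternCode_congr {m : ℕ} {W W' : ℕ → ℕ → Bool}
    (h : ∀ i < m, ∀ j < m, W i j = W' i j) : patternCode m W = patternCode m W' :=
  tableCode_congr fun i hi ↦ tableCode_congr fun j hj ↦ by rw [h i hi j hj]

theorem patternCode_le (m : ℕ) (W : ℕ → ℕ → Bool) :
    patternCode m W ≤ patternCode m fun _ _ ↦ true :=
  tableCode_mono m fun i ↦ tableCode_mono m fun j ↦ by cases W i j <;> simp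

theorem codedPattern_patternCode {m i j : ℕ} (W : ℕ → ℕ → Bool) (hi : i < m) (hj : j < m) :
    codedPattern (patternCode m W) i j = W i j := by
  rw [codedPattern, patternCode, tableValue_tableCode _ hi, tableValue_tableCode _ hj]
  cases W i j <;> simp

open Classical in
theorem encode_codeOfRule {m : ℕ} {R : (ℕ → ℕ → Bool) → Prop} (hR : IsLocalRule m R) :
    encode (codeOfRule m R) = Nat.pair m (encode
      ((List.range (patternCode m (fun _ _ ↦ true) + 1)).filter fun k ↦
        patternCode m (codedPattern k) = k ∧ ¬ R (codedPattern k))) := by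
  rw [encode_sigma_val]
  refine congrArg (Nat.pair m) <|
    encode_finset_eq _ (List.pairwise_lt_range.filter _) fun k ↦ ?_
  simp only [List.mem_filter, List.mem_range, decide_eq_true_eq]
  constructor
  · rintro ⟨-, hk, hRk⟩
    have restrict := fun i (hi : i < m) j (hj : j < m) ↦
      extendPattern_of_lt (codedPattern k) hi hj
    exact ⟨fun i j ↦ codedPattern k i j, mem_codeOfRule.2 ((hR.congr restrict).not.2 hRk),
      (encode_pattern _).trans ((patternCode_congr restrict).trans hk)⟩
  · rintro ⟨p, hp, rfl⟩
    have decoded := fun i (hi : i < m) j (hj : j < m) ↦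
      codedPattern_patternCode (extendPattern p) hi hj
    rw [encode_pattern]
    exact ⟨Nat.lt_succ_of_le (patternCode_le _ _), patternCode_congr decoded,
      (hR.congr decoded).not.2 (mem_codeOfRule.1 hp)⟩

section Primrec

variable {α : Type*} [Primcodable α]

theorem primrec_tableCode {m : α → ℕ} {g : α → ℕ → ℕ} (hm : Primrec m) (hg : Primrec₂ g) :
    Primrec fun x ↦ tableCode (m x) (g x) :=
  Primrec.encode.comp <| Primrec.list_map (Primrec.list_range.comp hm) <|
    Primrec₂.natPair.comp .snd hg

theorem primrec_tableValue : Primrec₂ tableValue :=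
  Primrec.snd.comp <| Primrec.unpair.comp <|
    (Primrec.list_getD 0).comp ((Primrec.ofNat (List ℕ)).comp .fst) .snd

theorem primrec_patternCode {m : α → ℕ} {W : α → ℕ → ℕ → Bool} (hm : Primrec m)
    (hW : Primrec fun p : (α × ℕ) × ℕ ↦ W p.1.1 p.1.2 p.2) :
    Primrec fun x ↦ patternCode (m x) (W x) :=
  primrec_tableCode hm (primrec_tableCode (hm.comp .fst) (Primrec.encode.comp hW))

theorem primrec_codedPattern {k i j : α → ℕ} (hk : Primrec k) (hi : Primrec i) (hj : Primrec j) :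
    Primrec fun x ↦ codedPattern (k x) (i x) (j x) :=
  (Primrec.eq.comp (primrec_tableValue.comp (primrec_tableValue.comp hk hi) hj)
    (Primrec.const 1)).decide

theorem primrec_encode_codeOfRule {m : α → ℕ} {R : α → (ℕ → ℕ → Bool) → Prop}
    (hR : ∀ x, IsLocalRule (m x) (R x)) (hm : Primrec m)
    (hR' : PrimrecPred fun p : α × ℕ ↦ R p.1 (codedPattern p.2)) :
    Primrec fun x ↦ encode (codeOfRule (m x) (R x)) := by
  classical
  simp only [fun x ↦ encode_codeOfRule (hR x)]
  have isForbidden : PrimrecRel fun (k : ℕ) (x : α) ↦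
      patternCode (m x) (codedPattern k) = k ∧ ¬ R x (codedPattern k) :=
    (Primrec.eq.comp (primrec_patternCode (hm.comp .snd)
      (primrec_codedPattern (Primrec.fst.comp (Primrec.fst.comp .fst))
        (Primrec.snd.comp .fst) .snd)) .fst).and
      (hR'.comp (Primrec.pair .snd .fst)).not
  have candidates : Primrec fun x ↦ List.range (patternCode (m x) (fun _ _ ↦ true) + 1) :=
    Primrec.list_range.comp (Primrec.succ.comp (primrec_patternCode hm (.const true)))
  refine Primrec₂.natPair.comp hm (Primrec.encode.comp ?_)
  exact (isForbidden.listFilter.comp candidates .id).of_eq fun x ↦ by simp only [id]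

end Primrec

/-! ### Computing the subshift of simulations -/

section Primrec

variable {α : Type*} [Primcodable α] {r : ℕ} {w : List Bool}

theorem primrecPred_exists_lt {n : α → ℕ} {R : α → ℕ → Prop} (hn : Primrec n)
    (hR : PrimrecRel R) : PrimrecPred fun x ↦ ∃ k < n x, R x k :=
  ((PrimrecRel.exists_mem_list (R := fun k x ↦ R x k) (hR.comp .snd .fst)).comp
    (Primrec.list_range.comp hn) .id).of_eq (by simp)

theorem primrecPred_forall_lt {n : α → ℕ} {R : α → ℕ → Prop} (hn : Primrec n)
    (hR : PrimrecRel R) : PrimrecPred fun x ↦ ∀ k < n x, R x k :=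
  ((PrimrecRel.forall_mem_list (R := fun k x ↦ R x k) (hR.comp .snd .fst)).comp
    (Primrec.list_range.comp hn) .id).of_eq (by simp)

theorem primrec_runLength (r : ℕ) (w : List Bool) : Primrec (runLength r w) :=
  Primrec.nat_add.comp (.const _) .id

theorem primrec_blockLength (r : ℕ) (w : List Bool) : Primrec (blockLength r w) :=
  Primrec.nat_add.comp (Primrec.nat_add.comp
    (Primrec.nat_add.comp (primrec_runLength r w) (.const 1)) (.const _)) .id

theorem primrec_blockBit {d a k : α → ℕ} (hd : Primrec d) (ha : Primrec a) (hk : Primrec k) :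
    Primrec fun x ↦ blockBit r w (d x) (a x) (k x) := by
  have run : Primrec fun x ↦ runLength r w (d x) := (primrec_runLength r w).comp hd
  have unary : Primrec fun x ↦ decide (k x < runLength r w (d x) + 1 + w.length + a x) :=
    (Primrec.nat_lt.comp hk <| Primrec.nat_add.comp
      (Primrec.nat_add.comp (Primrec.succ.comp run) (.const _)) ha).decide
  refine Primrec.ite (Primrec.nat_lt.comp hk run) (.const _) ?_
  simp only [List.getD_eq_getElem?_getD]
  exact Primrec.option_getD.comp
    (Primrec.list_getElem?.comp (.const _) (Primrec.nat_sub.comp hk run)) unary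

theorem primrecPred_isBlock {d a : α → ℕ} {u : α → ℕ → Bool} (hd : Primrec d) (ha : Primrec a)
    (hu : Primrec₂ u) : PrimrecPred fun x ↦ IsBlock r w (d x) (a x) (u x) :=
  primrecPred_forall_lt ((primrec_blockLength r w).comp hd) <|
    Primrec.eq.comp hu (primrec_blockBit (hd.comp .fst) (ha.comp .fst) .snd)

theorem primrecPred_exists_tiles {d : α → ℕ} {u v : α → ℕ → Bool} {R : α → ℕ → ℕ → Prop}
    (hd : Primrec d) (hu : Primrec₂ u) (hv : Primrec₂ v)
    (hR : PrimrecPred fun p : (α × ℕ) × ℕ ↦ R p.1.1 p.1.2 p.2) :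
    PrimrecPred fun x ↦ ∃ a < d x, ∃ b < d x,
      IsBlock r w (d x) a (u x) ∧ IsBlock r w (d x) b (v x) ∧ R x a b := by
  have param : Primrec fun p : (α × ℕ) × ℕ ↦ p.1.1 := Primrec.fst.comp .fst
  have hu' : Primrec₂ fun (p : (α × ℕ) × ℕ) k ↦ u p.1.1 k := hu.comp (param.comp .fst) .snd
  have hv' : Primrec₂ fun (p : (α × ℕ) × ℕ) k ↦ v p.1.1 k := hv.comp (param.comp .fst) .snd
  exact primrecPred_exists_lt hd <| primrecPred_exists_lt (hd.comp .fst) <|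
    (primrecPred_isBlock (hd.comp param) (Primrec.snd.comp .fst) hu').and <|
    (primrecPred_isBlock (hd.comp param) .snd hv').and hR

theorem primrec_shift {u : α → ℕ → Bool} {n : α → ℕ} (hu : Primrec₂ u) (hn : Primrec n) :
    Primrec₂ fun x k ↦ u x (n x + k) :=
  hu.comp .fst (Primrec.nat_add.comp (hn.comp .fst) .snd)

variable {T : ℕ → TileSet} {n : α → ℕ} {u v : α → ℕ → Bool}

theorem IsPrimrecFamily.primrec_blockLength_card (hT : IsPrimrecFamily T) (hn : Primrec n) :
    Primrec fun x ↦ blockLength r w (T (n x)).card :=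
  (primrec_blockLength r w).comp (hT.card.comp hn)

theorem IsPrimrecFamily.primrecPred_horPair (hT : IsPrimrecFamily T) (hn : Primrec n)
    (hu : Primrec₂ u) : PrimrecPred fun x ↦ HorPair r w (T (n x)) (u x) :=
  primrecPred_exists_tiles (hT.card.comp hn) hu
    (primrec_shift hu (hT.primrec_blockLength_card hn)) <|
    hT.hor.comp <| (hn.comp (Primrec.fst.comp .fst)).pair ((Primrec.snd.comp .fst).pair .snd)

theorem IsPrimrecFamily.primrecPred_verPair (hT : IsPrimrecFamily T) (hn : Primrec n)
    (hu : Primrec₂ u) (hv : Primrec₂ v) :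
    PrimrecPred fun x ↦ VerPair r w (T (n x)) (u x) (v x) :=
  primrecPred_exists_tiles (hT.card.comp hn) hu hv <|
    hT.ver.comp <| (hn.comp (Primrec.fst.comp .fst)).pair ((Primrec.snd.comp .fst).pair .snd)

theorem IsPrimrecFamily.primrecPred_isMarked (hT : IsPrimrecFamily T) (hn : Primrec n)
    (hu : Primrec₂ u) (hv : Primrec₂ v) :
    PrimrecPred fun x ↦ IsMarked r w (T (n x)) (u x) (v x) := by
  have start : Primrec fun p : α × ℕ ↦ p.2 * blockLength r w (T (n p.1)).card :=
    Primrec.nat_mul.comp .snd (hT.primrec_blockLength_card (hn.comp .fst))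
  refine (primrecPred_forall_lt (.const 3) ?_).and
    (hT.primrecPred_horPair hn (primrec_shift hv (hT.primrec_blockLength_card hn)))
  exact hT.primrecPred_verPair (hn.comp .fst)
    (primrec_shift (hu.comp (Primrec.fst.comp .fst) .snd) start)
    (primrec_shift (hv.comp (Primrec.fst.comp .fst) .snd) start)

theorem IsPrimrecFamily.primrecPred_simulationRule (hT : IsPrimrecFamily T)
    (f : (Fin (2 * r + 1) → Bool) → Bool) :
    PrimrecPred fun p : ℕ × ℕ ↦ SimulationRule r w (T p.1) f (codedPattern p.2) := by
  have length : Primrec fun p : ℕ × ℕ ↦ blockLength r w (T p.1).card :=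
    hT.primrec_blockLength_card .fst
  have column : Primrec fun p : ℕ × ℕ ↦ 2 * blockLength r w (T p.1).card :=
    Primrec.nat_mul.comp (.const 2) length
  have cells : PrimrecFibers fun (p : ℕ × ℕ) (j : Fin (2 * r + 1)) ↦
      codedPattern p.2 1 (2 * blockLength r w (T p.1).card - r + j) :=
    primrecFibers_pi fun j y ↦ Primrec.eq.comp (primrec_codedPattern .snd (.const 1) <|
      Primrec.nat_add.comp (Primrec.nat_sub.comp column (.const r)) (.const (j : ℕ))) (.const y)
  have cell : PrimrecFibers fun p : ℕ × ℕ ↦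
      codedPattern p.2 2 (2 * blockLength r w (T p.1).card) :=
    fun y ↦ Primrec.eq.comp (primrec_codedPattern .snd (.const 2) column) (.const y)
  have row (i : ℕ) : Primrec₂ fun (q : (ℕ × ℕ) × ℕ) (j : ℕ) ↦ codedPattern q.1.2 i (q.2 + j) :=
    primrec_codedPattern (Primrec.snd.comp (Primrec.fst.comp .fst)) (.const i)
      (Primrec.nat_add.comp (Primrec.snd.comp .fst) .snd)
  exact ((cells.prodMk cell).pred fun s ↦ f s.1 = s.2).or <|
    primrecPred_exists_lt (Primrec.succ.comp length) <|
      hT.primrecPred_isMarked (Primrec.fst.comp .fst) (row 0) (row 1)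

theorem IsPrimrecFamily.primrec_encode_simulationCode (hT : IsPrimrecFamily T)
    (f : (Fin (2 * r + 1) → Bool) → Bool) (w : List Bool) :
    Primrec fun n ↦ Encodable.encode (simulationCode r f w (T n)) :=
  primrec_encode_codeOfRule (fun _ ↦ isLocalRule_simulationRule)
    (Primrec.nat_mul.comp (.const 4) (hT.primrec_blockLength_card .id))
    (hT.primrecPred_simulationRule f)

end Primrec

theorem exists_primrec_code {F : Config Bool → Config Bool} (hF : IsCA F)
    (hsurj : ¬ Function.Surjective F) {T : ℕ → TileSet} (hT : IsPrimrecFamily T) :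
    ∃ c : ℕ → SFTCode, Primrec (fun n ↦ Encodable.encode (c n)) ∧ ∀ n,
      ((¬ ∃ t, (T n).IsTiledBy t) → proj '' sftOfCode (c n) = limitSet F) ∧
      ((∃ t, (T n).IsTiledBy t) → proj '' sftOfCode (c n) = Set.univ) := by
  obtain ⟨r, f, rfl⟩ := hF
  obtain ⟨w, hw⟩ := exists_isOrphan hsurj
  exact ⟨fun n ↦ simulationCode r f w (T n), hT.primrec_encode_simulationCode f w, fun n ↦
    ⟨proj_image_simulationCode_of_not_tiled hw, proj_image_simulationCode_of_tiled⟩⟩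

end RiceSFT

/-- Rice theorem for projections of two-dimensional subshifts of finite type:
if `P` holds for the limit set of some non-surjective CA on `𝟚` and fails for the
limit set of another one, then the predicate `π(Σ) ∈ P` on codes of two-dimensional
subshifts of finite type is not computable. -/
theorem rice_sft_projection_undecidable (P : Set (Set (Config Bool)))
    (h0 : ∃ F : Config Bool → Config Bool, IsCA F ∧ ¬ Function.Surjective F ∧ limitSet F ∈ P)
    (h1 : ∃ F : Config Bool → Config Bool, IsCA F ∧ ¬ Function.Surjective F ∧ limitSet F ∉ P) :
    ¬ ∃ g : ℕ → Bool, Computable g ∧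
        ∀ c : SFTCode, (g (Encodable.encode c) = true ↔ proj '' sftOfCode c ∈ P) := by
  rintro ⟨g, hg, hP⟩
  obtain ⟨F₀, hF₀, hF₀', mem⟩ := h0
  obtain ⟨F₁, hF₁, hF₁', not_mem⟩ := h1
  obtain ⟨T, hT, undecidable⟩ := RiceSFT.exists_primrecFamily_not_computablePred_isTiledBy
  obtain ⟨c₀, hc₀, proj_c₀⟩ := RiceSFT.exists_primrec_code hF₀ hF₀' hT
  obtain ⟨c₁, hc₁, proj_c₁⟩ := RiceSFT.exists_primrec_code hF₁ hF₁' hT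
  refine undecidable <| ComputablePred.computable_iff.2
    ⟨fun n ↦ g (Encodable.encode (c₀ n)) == g (Encodable.encode (c₁ n)),
      Primrec.beq.to_comp.comp (hg.comp hc₀.to_comp) (hg.comp hc₁.to_comp), funext fun n ↦ ?_⟩
  have answers_eq_iff : g (Encodable.encode (c₀ n)) = g (Encodable.encode (c₁ n)) ↔
      (proj '' sftOfCode (c₀ n) ∈ P ↔ proj '' sftOfCode (c₁ n) ∈ P) := by
    rw [Bool.eq_iff_iff, hP, hP]
  rw [beq_iff_eq, eq_iff_iff, answers_eq_iff]
  by_cases tiled : ∃ t, (T n).IsTiledBy t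
  · simp only [tiled, (proj_c₀ n).2 tiled, (proj_c₁ n).2 tiled]
  · simp only [tiled, (proj_c₀ n).1 tiled, (proj_c₁ n).1 tiled, mem, not_mem, iff_false,
      not_true_eq_false]
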